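/- arXiv:1705.08316 — 4 statements merged into one kernel-verified Lean document; each statement's English description precedes it below -/
import Mathlib

section
/- Let G be a simple graph on n ≥ 4 vertices such that both G and its complement Ḡ are connected and both have edge-connectivity 1 (i.e., each of G and Ḡ has a cut-edge). Then at least one of G and Ḡ has conflict-free connection number 2, i.e., cfc(G) = 2 or cfc(Ḡ) = 2. -/
open SimpleGraph

/-- An edge-coloring `c` makes `G` conflict-free connected: every pair of distinct
vertices is joined by a path on which some color appears on exactly one edge. -/
def IsCFCColoring {V : Type*} (G : SimpleGraph V) (c : Sym2 V → ℕ) : Prop :=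
  ∀ u v : V, u ≠ v → ∃ p : G.Path u v, ∃ e ∈ (p.1).edges,
    ∀ e' ∈ (p.1).edges, c e' = c e → e' = e

/-- The conflict-free connection number of `G`: the least `k` such that some
edge-coloring of `G` with colors from `{0, …, k-1}` makes `G` conflict-free connected. -/
noncomputable def cfcNum {V : Type*} (G : SimpleGraph V) : ℕ :=
  sInf {k | ∃ c : Sym2 V → ℕ, (∀ e ∈ G.edgeSet, c e < k) ∧ IsCFCColoring G c}

/-!
Suppose no vertex of `G` is a leaf. Then both sides `A` and `Aᶜ` of a bridge `s(x, y)` of `G` have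
at least three vertices, and `Gᶜ` contains all edges between `A` and `Aᶜ` except `s(x, y)`. By the
pigeonhole principle such a graph stays connected when any further edge is deleted, so `Gᶜ` has no
bridge. Hence both `G` and `Gᶜ` have a leaf, and up to exchanging them there are a leaf `x` of `G`
and a leaf `z` of `Gᶜ` whose only `Gᶜ`-neighbor is `x`; so `z` is adjacent in `G` to everything
but `x`.

If every vertex other than `z` has a neighbor other than `z`, color the edges at `z` with `1` and
the others with `0`. Otherwise some `a` has no neighbor but `z` in `G`, so in `Gᶜ` the adjacent
vertices `a` and `x` each miss only one vertex; there, color only the edge `s(a, x)` with `1`. In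
both cases any two nonadjacent vertices are joined by a path of length two or three that uses both
colors, and such a path is conflict-free.
-/

section

variable {V : Type*} {G : SimpleGraph V} {c : Sym2 V → ℕ} {a t u v w x y z : V}

/-- The vertices `u` and `v` are joined by a conflict-free path of `G` under the coloring `c`; this
is the condition that `IsCFCColoring` imposes on each pair of distinct vertices. -/
def HasCFPath (G : SimpleGraph V) (c : Sym2 V → ℕ) (u v : V) : Prop :=
  ∃ p : G.Path u v, ∃ e ∈ p.1.edges, ∀ e' ∈ p.1.edges, c e' = c e → e' = e

theorem HasCFPath.symm (h : HasCFPath G c u v) : HasCFPath G c v u := by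
  obtain ⟨p, e, he, huniq⟩ := h
  exact ⟨p.reverse, e, by simpa using he, fun e' he' => huniq e' (by simpa using he')⟩

theorem hasCFPath_of_adj (h : G.Adj u v) : HasCFPath G c u v :=
  ⟨Path.singleton h, s(u, v), by simp [Path.singleton], by simp [Path.singleton]⟩

theorem exists_forall_mem_eq_of_length_le_three {α β : Type*} {f : α → β} {l : List α}
    (hl : l.length ≤ 3) {i j : α} (hi : i ∈ l) (hj : j ∈ l) (hij : f i ≠ f j) :
    ∃ k ∈ l, ∀ k' ∈ l, f k' = f k → k' = k := by
  by_contra! h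
  obtain ⟨i', hi', hfi, hi'i⟩ := h i hi
  obtain ⟨j', hj', hfj, hj'j⟩ := h j hj
  have hnodup : [i, i', j, j'].Nodup := by grind
  have hsub : [i, i', j, j'] ⊆ l := by simp [hi, hi', hj, hj']
  have hlen : 4 ≤ l.length := (hnodup.subperm hsub).length_le
  omega

theorem hasCFPath_of_length_le_three {p : G.Walk u v} (hp : p.IsPath) (hl : p.length ≤ 3)
    {e e' : Sym2 V} (he : e ∈ p.edges) (he' : e' ∈ p.edges) (hc : c e ≠ c e') :
    HasCFPath G c u v :=
  ⟨⟨p, hp⟩, exists_forall_mem_eq_of_length_le_three (by simpa using hl) he he' hc⟩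

theorem hasCFPath_of_adj_adj (huw : G.Adj u w) (hwv : G.Adj w v) (huv : u ≠ v)
    (hc : c s(u, w) ≠ c s(w, v)) : HasCFPath G c u v :=
  hasCFPath_of_length_le_three (p := .cons huw (.cons hwv .nil))
    (by simp [Walk.isPath_def, huw.ne, hwv.ne, huv]) (by simp) (by simp) (by simp) hc

theorem hasCFPath_of_adj_adj_adj (huw : G.Adj u w) (hwt : G.Adj w t) (htv : G.Adj t v)
    (hut : u ≠ t) (huv : u ≠ v) (hwv : w ≠ v) (hc : c s(u, w) ≠ c s(w, t)) :
    HasCFPath G c u v :=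
  hasCFPath_of_length_le_three (p := .cons huw (.cons hwt (.cons htv .nil)))
    (by simp [Walk.isPath_def, huw.ne, hwt.ne, htv.ne, hut, huv, hwv]) (by simp)
    (by simp) (by simp) hc

theorem isCFCColoring_of_forall_not_adj
    (h : ∀ u v, u ≠ v → ¬G.Adj u v → HasCFPath G c u v) : IsCFCColoring G c := fun u v huv => by
  by_cases hadj : G.Adj u v
  · exact hasCFPath_of_adj hadj
  · exact h u v huv hadj

theorem IsCFCColoring.adj_of_monochromatic (hc : IsCFCColoring G c)
    (hmono : ∀ e ∈ G.edgeSet, ∀ e' ∈ G.edgeSet, c e = c e') (huv : u ≠ v) : G.Adj u v := by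
  obtain ⟨⟨p, hp⟩, e, he, huniq⟩ := hc u v huv
  have hrep : p.edges = List.replicate p.edges.length e :=
    List.eq_replicate_of_mem fun e' he' =>
      huniq e' he' (hmono _ (p.edges_subset_edgeSet he') _ (p.edges_subset_edgeSet he))
  have hle : p.edges.length ≤ 1 := List.nodup_replicate.1 (hrep ▸ hp.isTrail.edges_nodup)
  have hpos : 0 < p.edges.length := List.length_pos_of_mem he
  exact p.adj_of_length_eq_one (by rw [← p.length_edges]; omega)

theorem IsCFCColoring.two_le (hc : IsCFCColoring G c) (hG : G ≠ ⊤) {k : ℕ}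
    (hk : ∀ e ∈ G.edgeSet, c e < k) : 2 ≤ k := by
  obtain ⟨u, v, huv, hadj⟩ := ne_top_iff_exists_not_adj.1 hG
  by_contra! hk'
  refine hadj (hc.adj_of_monochromatic (fun e he e' he' => ?_) huv)
  have := hk e he
  have := hk e' he'
  omega

theorem cfcNum_eq_two_of_isCFCColoring_indicator (hG : G ≠ ⊤) (S : Set (Sym2 V))
    (hS : IsCFCColoring G (S.indicator 1)) : cfcNum G = 2 := by
  classical
  have hmem : 2 ∈ {k | ∃ c : Sym2 V → ℕ, (∀ e ∈ G.edgeSet, c e < k) ∧ IsCFCColoring G c} :=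
    ⟨_, fun e _ => by rw [Set.indicator_apply]; split_ifs <;> simp, hS⟩
  refine le_antisymm (Nat.sInf_le hmem) (le_csInf ⟨2, hmem⟩ ?_)
  rintro k ⟨c, hk, hc⟩
  exact hc.two_le hG hk

/-- The vertex `x` is a leaf of `G` attached at `y`: its only neighbor is `y`. It is phrased without
degrees so that `V` may be infinite. -/
def IsLeafAt (G : SimpleGraph V) (x y : V) : Prop :=
  ∀ v, G.Adj x v ↔ v = y

theorem IsLeafAt.adj (h : IsLeafAt G x y) : G.Adj x y :=
  (h y).2 rfl

theorem IsLeafAt.adj_of_compl (h : IsLeafAt Gᶜ z x) (hvz : v ≠ z) (hvx : v ≠ x) : G.Adj z v := by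
  by_contra hadj
  exact hvx ((h v).1 ((compl_adj _ _ _).2 ⟨hvz.symm, hadj⟩))

theorem IsLeafAt.ne_of_compl (hx : IsLeafAt G x y) (hz : IsLeafAt Gᶜ z x) : y ≠ z := by
  rintro rfl
  exact ((compl_adj _ _ _).1 hz.adj).2 hx.adj.symm

theorem exists_adj_ne_of_forall_not_isLeafAt (hleaf : ∀ x y, ¬IsLeafAt G x y)
    (huv : G.Adj u v) : ∃ w, w ≠ v ∧ G.Adj u w := by
  by_contra! h
  exact hleaf u v fun w => ⟨fun hw => by_contra fun hwv => h w hwv hw, fun hw => hw ▸ huv⟩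

theorem IsLeafAt.compl_of_common_leaf (hx : IsLeafAt G x y) (hx' : IsLeafAt Gᶜ x w)
    (hyw : G.Adj y w) : IsLeafAt Gᶜ w x := by
  refine fun v => ⟨fun hwv => ?_, fun hvx => hvx ▸ hx'.adj.symm⟩
  obtain ⟨hwv, hnwv⟩ := (compl_adj _ _ _).1 hwv
  by_contra hvx
  obtain rfl : v = y := (hx v).1 (hx'.adj_of_compl hvx hwv.symm)
  exact hnwv hyw.symm

theorem exists_isLeafAt_isLeafAt_compl {x' z' : V} (hx : IsLeafAt G x x')
    (hz : IsLeafAt Gᶜ z z') :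
    (∃ x y z, IsLeafAt G x y ∧ IsLeafAt Gᶜ z x) ∨
      ∃ x y z, IsLeafAt Gᶜ x y ∧ IsLeafAt G z x := by
  by_cases hz'x : z' = x
  · exact .inl ⟨x, x', z, hx, hz'x ▸ hz⟩
  by_cases hx'z : x' = z
  · exact .inr ⟨z, z', x, hz, hx'z ▸ hx⟩
  have hxz : x = z := by
    by_contra hxz
    exact hx'z ((hx z).1 (hz.adj_of_compl hxz (Ne.symm hz'x)).symm).symm
  subst hxz
  have hx'z' : x' ≠ z' := by
    rintro rfl
    exact ((compl_adj _ _ _).1 hz.adj).2 hx.adj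
  by_cases hadj : G.Adj x' z'
  · exact .inl ⟨x, x', z', hx, hx.compl_of_common_leaf hz hadj⟩
  · refine .inr ⟨x, z', x', hz, ?_⟩
    simpa using hz.compl_of_common_leaf (by rwa [compl_compl])
      ((compl_adj _ _ _).2 ⟨hx'z'.symm, fun h => hadj h.symm⟩)

theorem mem_edgeSet_of_isBridge (hG : G.Preconnected) {e : Sym2 V} (he : G.IsBridge e) :
    e ∈ G.edgeSet := by
  induction e with
  | h u v => exact he.reachable_iff_adj.1 (hG u v)

theorem exists_forall_mk_notMem {A B : Set V} (hAB : Disjoint A B) {F : Set (Sym2 V)}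
    (hF : F.encard < B.encard) : ∃ b ∈ B, ∀ a ∈ A, s(a, b) ∉ F := by
  by_contra! h
  choose! f hfA hfF using h
  refine hF.not_ge (Set.encard_le_encard_of_injOn (f := fun b => s(f b, b)) hfF ?_)
  intro b hb b' hb' heq
  rcases Sym2.eq_iff.1 heq with ⟨-, h⟩ | ⟨h, -⟩
  · exact h
  · exact (hAB.ne_of_mem (hfA b hb) hb' h).elim

theorem preconnected_of_forall_crossing_adj {A : Set V} {F : Set (Sym2 V)}
    (hA : F.encard < A.encard) (hAc : F.encard < Aᶜ.encard)
    (hadj : ∀ p ∈ A, ∀ q ∉ A, s(p, q) ∉ F → G.Adj p q) : G.Preconnected := by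
  obtain ⟨q, hqA, hq⟩ := exists_forall_mk_notMem disjoint_compl_right hAc
  obtain ⟨p, hpA, hp⟩ := exists_forall_mk_notMem disjoint_compl_left hA
  have hpq : G.Adj p q := hadj p hpA q hqA (hq p hpA)
  have hreach : ∀ v, G.Reachable q v := fun v => by
    by_cases hv : v ∈ A
    · exact (hadj v hv q hqA (hq v hv)).symm.reachable
    · exact hpq.symm.reachable.trans (hadj p hpA v hv (Sym2.eq_swap ▸ hp v hv)).reachable
  exact fun u v => (hreach u).symm.trans (hreach v)

theorem three_le_encard_reachable_deleteEdges (hleaf : ∀ x y, ¬IsLeafAt G x y)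
    (hxy : G.Adj x y) : 3 ≤ {v | (G.deleteEdges {s(x, y)}).Reachable x v}.encard := by
  obtain ⟨a, hay, hxa⟩ := exists_adj_ne_of_forall_not_isLeafAt hleaf hxy
  obtain ⟨b, hbx, hab⟩ := exists_adj_ne_of_forall_not_isLeafAt hleaf hxa.symm
  have hxa' : (G.deleteEdges {s(x, y)}).Adj x a := by simp [hxa, hay, hxy.ne]
  have hab' : (G.deleteEdges {s(x, y)}).Adj a b := by simp [hab, hxa.ne', hay]
  have hsub : {x, a, b} ⊆ {v | (G.deleteEdges {s(x, y)}).Reachable x v} := by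
    simp [Set.insert_subset_iff, hxa'.reachable, hxa'.reachable.trans hab'.reachable]
  calc 3 = ({x, a, b} : Set V).encard :=
        (Set.encard_eq_three.2 ⟨x, a, b, hxa.ne, hbx.symm, hab.ne, rfl⟩).symm
    _ ≤ _ := Set.encard_le_encard hsub

theorem exists_isLeafAt_of_isBridge_of_isBridge_compl (hb : ∃ e ∈ G.edgeSet, G.IsBridge e)
    (hbc : ∃ e, Gᶜ.IsBridge e) : ∃ x y, IsLeafAt G x y := by
  by_contra! hleaf
  obtain ⟨⟨x, y⟩, hxy, hbridge⟩ := hb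
  obtain ⟨⟨u, v⟩, hbridge'⟩ := hbc
  set H := G.deleteEdges {s(x, y)}
  have hxyH : ¬H.Reachable x y := hbridge
  set A := {v | H.Reachable x v}
  have hcardA : 3 ≤ A.encard := three_le_encard_reachable_deleteEdges hleaf hxy
  have hcardAc : 3 ≤ Aᶜ.encard := by
    refine (three_le_encard_reachable_deleteEdges hleaf hxy.symm).trans (Set.encard_le_encard ?_)
    rw [Sym2.eq_swap]
    exact fun q hyq hxq => hxyH (hxq.trans hyq.symm)
  have hcardF : ({s(x, y), s(u, v)} : Set (Sym2 V)).encard < 3 := by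
    grw [Set.encard_insert_le, Set.encard_singleton]
    norm_num
  have hcross : ∀ p ∈ A, ∀ q ∉ A, s(p, q) ≠ s(x, y) → Gᶜ.Adj p q := fun p hp q hq hpq =>
    (compl_adj _ _ _).2 ⟨fun h => hq (h ▸ hp),
      fun h => hq (hp.trans (Adj.reachable (deleteEdges_adj.2 ⟨h, hpq⟩)))⟩
  refine hbridge' (preconnected_of_forall_crossing_adj (hcardF.trans_le hcardA)
    (hcardF.trans_le hcardAc) (fun p hp q hq hpq => ?_) u v)
  simp only [Set.mem_insert_iff, Set.mem_singleton_iff, not_or] at hpq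
  exact deleteEdges_adj.2 ⟨hcross p hp q hq hpq.1, hpq.2⟩

theorem cfcNum_eq_two_of_isLeafAt_of_exists_adj_ne (hx : IsLeafAt G x y) (hz : IsLeafAt Gᶜ z x)
    (hnb : ∀ a ≠ z, ∃ g ≠ z, G.Adj a g) : cfcNum G = 2 := by
  obtain ⟨hzx, hnzx⟩ := (compl_adj _ _ _).1 hz.adj
  have hyz : y ≠ z := hx.ne_of_compl hz
  have hoff : ∀ {a}, a ≠ z → a ≠ y → ∃ g, g ≠ x ∧ g ≠ z ∧ G.Adj a g := fun {a} haz hay => by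
    obtain ⟨g, hgz, hag⟩ := hnb a haz
    refine ⟨g, ?_, hgz, hag⟩
    rintro rfl
    exact hay ((hx a).1 hag.symm)
  have hpath : ∀ u v, u ≠ v → ¬G.Adj u v → u ≠ z → u ≠ y → v ≠ x →
      HasCFPath G ({e | z ∈ e}.indicator 1) u v := fun u v huv hadj huz huy hvx => by
    obtain ⟨g, hgx, hgz, hug⟩ := hoff huz huy
    have hgz' : G.Adj g z := (hz.adj_of_compl hgz hgx).symm
    have hc : {e | z ∈ e}.indicator (1 : Sym2 V → ℕ) s(u, g) ≠
        {e | z ∈ e}.indicator 1 s(g, z) := by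
      simp [huz.symm, hgz.symm]
    by_cases hvz : v = z
    · subst hvz
      exact hasCFPath_of_adj_adj hug hgz' huv hc
    · refine hasCFPath_of_adj_adj_adj hug hgz' (hz.adj_of_compl hvz hvx) huz huv ?_ hc
      rintro rfl
      exact hadj hug
  have hG : G ≠ ⊤ := ne_top_iff_exists_not_adj.2 ⟨z, x, hzx, hnzx⟩
  refine cfcNum_eq_two_of_isCFCColoring_indicator hG {e | z ∈ e}
    (isCFCColoring_of_forall_not_adj fun u v huv hadj => ?_)
  by_cases h : u ≠ z ∧ u ≠ y ∧ v ≠ x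
  · exact hpath u v huv hadj h.1 h.2.1 h.2.2
  · -- The reversed pair `v`, `u` satisfies the three conditions of `hpath`.
    have hzy : G.Adj z y := hz.adj_of_compl hyz hx.adj.ne'
    refine (hpath v u huv.symm (fun h => hadj h.symm) ?_ ?_ ?_).symm <;>
      grind [G.adj_comm, hz.adj_of_compl, hx.adj.ne]

theorem cfcNum_eq_two_of_adj_of_forall_ne_adj (hG : G ≠ ⊤) (hax : G.Adj a x) (hyz : y ≠ z)
    (ha : ∀ v, v ≠ a → v ≠ z → G.Adj a v) (hx : ∀ v, v ≠ x → v ≠ y → G.Adj x v) :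
    cfcNum G = 2 := by
  have hpath : ∀ u v, u ≠ v → u ≠ x → u ≠ z → v ≠ a → v ≠ y →
      HasCFPath G (Set.indicator {s(a, x)} 1) u v := fun u v huv hux huz hva hvy => by
    by_cases hua : u = a
    · subst hua
      by_cases hvx : v = x
      · exact hasCFPath_of_adj (hvx ▸ hax)
      · exact hasCFPath_of_adj_adj hax (hx v hvx hvy) huv (by simp [hva, hvx])
    have hua' : G.Adj u a := (ha u hua huz).symm
    have hc : Set.indicator {s(a, x)} (1 : Sym2 V → ℕ) s(u, a) ≠
        Set.indicator {s(a, x)} 1 s(a, x) := by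
      simp [hux, hua]
    by_cases hvx : v = x
    · subst hvx
      exact hasCFPath_of_adj_adj hua' hax huv hc
    · exact hasCFPath_of_adj_adj_adj hua' hax (hx v hvx hvy) hux huv hva.symm hc
  refine cfcNum_eq_two_of_isCFCColoring_indicator hG {s(a, x)}
    (isCFCColoring_of_forall_not_adj fun u v huv hadj => ?_)
  by_cases h : u ≠ x ∧ u ≠ z ∧ v ≠ a ∧ v ≠ y
  · exact hpath u v huv h.1 h.2.1 h.2.2.1 h.2.2.2
  · -- The reversed pair `v`, `u` satisfies the four conditions of `hpath`.
    refine (hpath v u huv.symm ?_ ?_ ?_ ?_).symm <;> grind [G.adj_comm]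

theorem cfcNum_eq_two_or_compl_of_isLeafAt (hx : IsLeafAt G x y) (hz : IsLeafAt Gᶜ z x) :
    cfcNum G = 2 ∨ cfcNum Gᶜ = 2 := by
  by_cases! hnb : ∀ a ≠ z, ∃ g ≠ z, G.Adj a g
  · exact .inl (cfcNum_eq_two_of_isLeafAt_of_exists_adj_ne hx hz hnb)
  obtain ⟨a, -, ha⟩ := hnb
  obtain ⟨hzx, hnzx⟩ := (compl_adj _ _ _).1 hz.adj
  have hyz : y ≠ z := hx.ne_of_compl hz
  have hax : a ≠ x := by
    rintro rfl
    exact ha y hyz hx.adj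
  have hnax : ¬G.Adj a x := ha x hzx.symm
  refine .inr (cfcNum_eq_two_of_adj_of_forall_ne_adj (a := a) (x := x) ?_ ?_ hyz ?_ ?_)
  · exact ne_top_iff_exists_not_adj.2 ⟨x, y, hx.adj.ne, fun h => ((compl_adj _ _ _).1 h).2 hx.adj⟩
  · exact (compl_adj _ _ _).2 ⟨hax, hnax⟩
  · exact fun v hva hvz => (compl_adj _ _ _).2 ⟨hva.symm, ha v hvz⟩
  · exact fun v hvx hvy => (compl_adj _ _ _).2 ⟨hvx.symm, fun h => hvy ((hx v).1 h)⟩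

theorem cfcNum_eq_two_or_compl_general (G : SimpleGraph V) (hb : ∃ e ∈ G.edgeSet, G.IsBridge e)
    (hbc : ∃ e ∈ Gᶜ.edgeSet, Gᶜ.IsBridge e) : cfcNum G = 2 ∨ cfcNum Gᶜ = 2 := by
  obtain ⟨x', y', hx'⟩ := exists_isLeafAt_of_isBridge_of_isBridge_compl hb
    (hbc.imp fun _ he => he.2)
  obtain ⟨z', w', hz'⟩ := exists_isLeafAt_of_isBridge_of_isBridge_compl hbc
    (by simpa using hb.imp fun _ he => he.2)
  rcases exists_isLeafAt_isLeafAt_compl hx' hz' with ⟨x, y, z, hx, hz⟩ | ⟨x, y, z, hx, hz⟩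
  · exact cfcNum_eq_two_or_compl_of_isLeafAt hx hz
  · have hcompl := cfcNum_eq_two_or_compl_of_isLeafAt hx (by rwa [compl_compl])
    rwa [compl_compl, or_comm] at hcompl

end

/-- If G and its complement are both connected on n ≥ 4 vertices and both have a
cut-edge, then cfc(G) = 2 or cfc(Ḡ) = 2. -/
theorem cfcNum_eq_two_or_compl {V : Type*} [Fintype V] (G : SimpleGraph V)
    (n : ℕ) (hn : Fintype.card V = n) (h4 : 4 ≤ n)
    (hG : G.Connected) (hGc : Gᶜ.Connected)
    (hb : ∃ e : Sym2 V, G.IsBridge e) (hbc : ∃ e : Sym2 V, Gᶜ.IsBridge e) :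
    cfcNum G = 2 ∨ cfcNum Gᶜ = 2 :=
  cfcNum_eq_two_or_compl_general G
    (hb.imp fun _ he => ⟨mem_edgeSet_of_isBridge hG.preconnected he, he⟩)
    (hbc.imp fun _ he => ⟨mem_edgeSet_of_isBridge hGc.preconnected he, he⟩)
end

section
/- Let G be a simple graph on n ≥ 5 vertices such that both G and its complement Ḡ are 2-edge-connected (connected with no cut-edge) and both are connected. Then cfc(G) + cfc(Ḡ) = 4 and cfc(G) · cfc(Ḡ) = 4. -/
open SimpleGraph

/-!
A single color is conflict-free on paths with one edge only, so `cfc(G) ≥ 2` as soon as `G` is not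
complete, which holds when its complement is connected on at least two vertices.

For `cfc(G) ≤ 2`, mark some edges so that any two vertices are joined by a path with exactly one
marked edge. Such a marking is grown ear by ear, keeping the unmarked part `H` connected. Leave `H`
through an edge `zw` and return without using `zw`, along a path from `z` to `a` outside `H` and an
edge `ab`; this is possible because `zw` is not a bridge.
* If `w ≠ b`, no new mark is needed: two vertices of the ear are joined through `H` along a path
  from `w` to `b` with one marked edge, and a vertex `v` of `H` is reached from the ear through
  whichever of `w` and `b` differs from `v`.
* If `w = b`, mark `zw`: two vertices of the ear, or one on the ear and one in `H`, are then joined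
  by a path across `zw`.

Zorn's lemma provides a maximal marking, which is therefore spanning.
-/

section

variable {V : Type*} {G : SimpleGraph V}

/-- `P` and `Q` are vertex-disjoint connected subgraphs of `H`. They stand for the two halves of
a path in which only the edge from `P` to `Q` is marked. -/
structure IsConnectedPair (H P Q : G.Subgraph) : Prop where
  left_le : P ≤ H
  right_le : Q ≤ H
  left_connected : P.Connected
  right_connected : Q.Connected
  disjoint : Disjoint P Q

/-- `u` and `v` are joined by a path with exactly one edge in `M` and all other edges in `H`.
The parts of the path before and after that edge are encoded by disjoint connected subgraphs. -/
def JoinedAcross (H M : G.Subgraph) (u v : V) : Prop :=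
  ∃ P Q, IsConnectedPair H P Q ∧ u ∈ P.verts ∧ v ∈ Q.verts ∧
    ∃ x ∈ P.verts, ∃ y ∈ Q.verts, M.Adj x y

/-- A connected subgraph `H` of unmarked edges, together with a subgraph `M` of marked edges on
vertices of `H`, such that a path with a single marked edge joins any two vertices of `H`. Having
two separate subgraphs makes the path condition monotone in both of them. -/
structure IsMarking (H M : G.Subgraph) : Prop where
  connected : H.Connected
  verts_subset : M.verts ⊆ H.verts
  disjoint_edgeSet : Disjoint H.edgeSet M.edgeSet
  joinedAcross : ∀ ⦃u⦄, u ∈ H.verts → ∀ ⦃v⦄, v ∈ H.verts → u ≠ v → JoinedAcross H M u v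

theorem connected_subgraphOfAdj_sup {H K : G.Subgraph} (hH : H.Connected) (hK : K.Connected)
    {x y : V} (hx : x ∈ H.verts) (hy : y ∈ K.verts) (hxy : G.Adj x y) :
    (G.subgraphOfAdj hxy ⊔ H ⊔ K).Connected := by
  rw [Subgraph.subgraphOfAdj_eq_induce]
  exact Subgraph.connected_induce_top_sup hH.preconnected hK.preconnected hx hy hxy

theorem verts_subgraphOfAdj_sup {H K : G.Subgraph} {x y : V} (hx : x ∈ H.verts)
    (hy : y ∈ K.verts) (hxy : G.Adj x y) :
    (G.subgraphOfAdj hxy ⊔ H ⊔ K).verts = H.verts ∪ K.verts := by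
  ext
  simp only [Subgraph.verts_sup, subgraphOfAdj_verts]
  grind

theorem disjoint_subgraphOfAdj_sup {H K L : G.Subgraph} {x y : V} (hx : x ∈ H.verts)
    (hy : y ∈ K.verts) (hxy : G.Adj x y) (hHL : Disjoint H L) (hKL : Disjoint K L) :
    Disjoint (G.subgraphOfAdj hxy ⊔ H ⊔ K) L := by
  rw [← Subgraph.disjoint_verts_iff_disjoint] at hHL hKL ⊢
  rw [verts_subgraphOfAdj_sup hx hy, Set.disjoint_union_left]
  exact ⟨hHL, hKL⟩

namespace IsConnectedPair

variable {H H' P Q K : G.Subgraph} {x y : V}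

theorem symm (h : IsConnectedPair H P Q) : IsConnectedPair H Q P :=
  ⟨h.right_le, h.left_le, h.right_connected, h.left_connected, h.disjoint.symm⟩

theorem mono (hH : H ≤ H') (h : IsConnectedPair H P Q) : IsConnectedPair H' P Q :=
  { h with left_le := h.left_le.trans hH, right_le := h.right_le.trans hH }

theorem attach (h : IsConnectedPair H P Q) (hK : K.Connected) (hHK : Disjoint H K)
    (hx : x ∈ P.verts) (hy : y ∈ K.verts) (hxy : G.Adj x y) :
    IsConnectedPair (G.subgraphOfAdj hxy ⊔ H ⊔ K) (G.subgraphOfAdj hxy ⊔ P ⊔ K) Q where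
  left_le := sup_le_sup_right (sup_le_sup_left h.left_le _) _
  right_le := h.right_le.trans (le_sup_right.trans le_sup_left)
  left_connected := connected_subgraphOfAdj_sup h.left_connected hK hx hy hxy
  right_connected := h.right_connected
  disjoint := disjoint_subgraphOfAdj_sup hx hy hxy h.disjoint (hHK.mono_left h.right_le).symm

end IsConnectedPair

namespace JoinedAcross

variable {H H' M M' K : G.Subgraph} {u v t y : V}

theorem symm (h : JoinedAcross H M u v) : JoinedAcross H M v u := by
  obtain ⟨P, Q, hPQ, hu, hv, x, hx, y, hy, hxy⟩ := h
  exact ⟨Q, P, hPQ.symm, hv, hu, y, hy, x, hx, hxy.symm⟩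

theorem mono (hH : H ≤ H') (hM : M ≤ M') (h : JoinedAcross H M u v) :
    JoinedAcross H' M' u v := by
  obtain ⟨P, Q, hPQ, hu, hv, x, hx, y, hy, hxy⟩ := h
  exact ⟨P, Q, hPQ.mono hH, hu, hv, x, hx, y, hy, hM.2 hxy⟩

theorem attach (h : JoinedAcross H M u v) (hK : K.Connected) (hHK : Disjoint H K)
    (hy : y ∈ K.verts) (ht : t ∈ K.verts) (huy : G.Adj u y) :
    JoinedAcross (G.subgraphOfAdj huy ⊔ H ⊔ K) M t v := by
  obtain ⟨P, Q, hPQ, hu, hv, x, hx, y', hy', hxy'⟩ := h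
  exact ⟨_, Q, hPQ.attach hK hHK hu hy huy, .inr ht, hv, x, .inl (.inr hx), y', hy', hxy'⟩

theorem exists_path (hHM : Disjoint H.edgeSet M.edgeSet) (h : JoinedAcross H M u v) :
    ∃ p : G.Path u v, ∃! e, e ∈ p.1.edges ∧ e ∈ M.edgeSet := by
  classical
  obtain ⟨P, Q, hPQ, hu, hv, x, hx, y, hy, hxy⟩ := h
  obtain ⟨p, hp⟩ := (P.connected_iff_forall_exists_walk_subgraph.1 hPQ.left_connected).2 hu hx
  obtain ⟨q, hq⟩ := (Q.connected_iff_forall_exists_walk_subgraph.1 hPQ.right_connected).2 hy hv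
  replace hp : p.bypass.toSubgraph ≤ P := Walk.toSubgraph_bypass_le_toSubgraph.trans hp
  replace hq : q.bypass.toSubgraph ≤ Q := Walk.toSubgraph_bypass_le_toSubgraph.trans hq
  have hdisj : p.bypass.support.Disjoint q.bypass.support := fun z hzp hzq =>
    Set.disjoint_left.1 (Subgraph.disjoint_verts_iff_disjoint.2 hPQ.disjoint)
      (hp.1 (Walk.mem_verts_toSubgraph _ |>.2 hzp)) (hq.1 (Walk.mem_verts_toSubgraph _ |>.2 hzq))
  have hpath : (p.bypass.append (.cons hxy.adj_sub q.bypass)).IsPath := by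
    rw [Walk.isPath_def, Walk.support_append, Walk.support_cons, List.tail_cons]
    exact p.bypass_isPath.support_nodup.append q.bypass_isPath.support_nodup hdisj
  have hunmarked {a b : V} (r : G.Walk a b) (hr : r.toSubgraph ≤ H) {e : Sym2 V}
      (he : e ∈ r.edges) : e ∉ M.edgeSet :=
    Set.disjoint_left.1 hHM (Subgraph.edgeSet_mono hr (r.mem_edges_toSubgraph.2 he))
  refine ⟨⟨_, hpath⟩, s(x, y), ⟨by simp, hxy⟩, fun e ⟨he, heM⟩ => ?_⟩
  rw [Walk.edges_append, Walk.edges_cons, List.mem_append, List.mem_cons] at he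
  rcases he with he | he | he
  · exact absurd heM (hunmarked _ (hp.trans hPQ.left_le) he)
  · exact he
  · exact absurd heM (hunmarked _ (hq.trans hPQ.right_le) he)

end JoinedAcross

theorem exists_isConnectedPair_of_isPath_append {z u a v : V} {p : G.Walk z u} {q : G.Walk u a}
    (hpq : (p.append q).IsPath) (hv : v ∈ q.support) (huv : u ≠ v) :
    ∃ P Q, IsConnectedPair (p.append q).toSubgraph P Q ∧ z ∈ P.verts ∧ u ∈ P.verts ∧
      v ∈ Q.verts ∧ a ∈ Q.verts := by
  cases q with
  | nil => simp_all
  | cons h q =>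
    have hvq : v ∈ q.support := by simpa [huv.symm] using hv
    refine ⟨p.toSubgraph, q.toSubgraph,
      ⟨?_, ?_, p.toSubgraph_connected, q.toSubgraph_connected, ?_⟩,
      by simp, by simp, by simpa using hvq, by simp⟩
    · simp
    · rw [Walk.toSubgraph_append, Walk.toSubgraph]
      exact le_sup_right.trans le_sup_right
    · rw [Walk.isPath_def, Walk.support_append, Walk.support_cons, List.tail_cons] at hpq
      rw [← Subgraph.disjoint_verts_iff_disjoint, Set.disjoint_left]
      simpa [List.Disjoint] using List.disjoint_of_nodup_append hpq

theorem exists_isConnectedPair_of_isPath {z a u v : V} {q : G.Walk z a} (hq : q.IsPath)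
    (hu : u ∈ q.support) (hv : v ∈ q.support) (huv : u ≠ v) :
    ∃ P Q, IsConnectedPair q.toSubgraph P Q ∧ z ∈ P.verts ∧ a ∈ Q.verts ∧
      (u ∈ P.verts ∧ v ∈ Q.verts ∨ v ∈ P.verts ∧ u ∈ Q.verts) := by
  obtain ⟨p, r, rfl⟩ := Walk.mem_support_iff_exists_append.1 hu
  rcases (Walk.mem_support_append_iff _ _).1 hv with hv | hv
  · have hrev : (r.reverse.append p.reverse).IsPath := by
      simpa only [← Walk.reverse_append] using hq.reverse
    obtain ⟨P, Q, hPQ, haP, huP, hvQ, hzQ⟩ :=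
      exists_isConnectedPair_of_isPath_append hrev (by simpa using hv) huv
    rw [← Walk.reverse_append, Walk.toSubgraph_reverse] at hPQ
    exact ⟨Q, P, hPQ.symm, hzQ, haP, .inr ⟨hvQ, huP⟩⟩
  · obtain ⟨P, Q, hPQ, hzP, huP, hvQ, haQ⟩ := exists_isConnectedPair_of_isPath_append hq hv huv
    exact ⟨P, Q, hPQ, hzP, haQ, .inl ⟨huP, hvQ⟩⟩

theorem isMarking_singletonSubgraph_bot (v : V) : IsMarking (G.singletonSubgraph v) ⊥ where
  connected := Subgraph.singletonSubgraph_connected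
  verts_subset := by simp
  disjoint_edgeSet := by simp
  joinedAcross := by
    rintro u rfl w rfl huw
    exact absurd rfl huw

theorem disjoint_edgeSet_subgraphOfAdj {M : G.Subgraph} {x y : V} (hx : x ∉ M.verts)
    (hxy : G.Adj x y) : Disjoint (G.subgraphOfAdj hxy).edgeSet M.edgeSet := by
  rw [edgeSet_subgraphOfAdj, Set.disjoint_singleton_left]
  exact fun h => hx (M.edge_vert h)

namespace IsMarking

variable {H M H' M' : G.Subgraph} {z a b w : V} {q : G.Walk z a}

theorem disjoint_edgeSet_ear (h : IsMarking H M) (hqH : Disjoint q.toSubgraph H)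
    (hab : G.Adj a b) :
    Disjoint (G.subgraphOfAdj hab ⊔ q.toSubgraph ⊔ H).edgeSet M.edgeSet := by
  have hqM : Disjoint q.toSubgraph.verts M.verts :=
    (Subgraph.disjoint_verts_iff_disjoint.2 hqH).mono_right h.verts_subset
  rw [Subgraph.edgeSet_sup, Subgraph.edgeSet_sup, Set.disjoint_union_left, Set.disjoint_union_left]
  exact ⟨⟨disjoint_edgeSet_subgraphOfAdj (hqM.notMem_of_mem_left q.end_mem_verts_toSubgraph) hab,
    (Subgraph.disjoint_verts_iff_disjoint.1 hqM).edgeSet⟩, h.disjoint_edgeSet⟩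

theorem of_ear (h : IsMarking H M) (hq : q.IsPath) (hb : b ∈ H.verts) (hab : G.Adj a b)
    (hH : G.subgraphOfAdj hab ⊔ q.toSubgraph ⊔ H ≤ H')
    (hverts : H'.verts = q.toSubgraph.verts ∪ H.verts)
    (hM : M ≤ M') (hsub : M'.verts ⊆ H'.verts) (hdisj : Disjoint H'.edgeSet M'.edgeSet)
    (hmixed : ∀ u ∈ q.toSubgraph.verts, ∀ v ∈ H.verts, JoinedAcross H' M' u v)
    (hsplit : ∀ P Q, IsConnectedPair q.toSubgraph P Q → z ∈ P.verts → a ∈ Q.verts →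
      ∀ u ∈ P.verts, ∀ v ∈ Q.verts, JoinedAcross H' M' u v) :
    IsMarking H' M' where
  connected :=
    (connected_subgraphOfAdj_sup q.toSubgraph_connected h.connected q.end_mem_verts_toSubgraph hb
      hab).mono hH (hverts ▸ verts_subgraphOfAdj_sup q.end_mem_verts_toSubgraph hb hab)
  verts_subset := hsub
  disjoint_edgeSet := hdisj
  joinedAcross := by
    rw [hverts]
    rintro u (hu | hu) v (hv | hv) huv
    · obtain ⟨P, Q, hPQ, hz, ha, ⟨hu, hv⟩ | ⟨hv, hu⟩⟩ := exists_isConnectedPair_of_isPath hq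
        (q.mem_verts_toSubgraph.1 hu) (q.mem_verts_toSubgraph.1 hv) huv
      · exact hsplit P Q hPQ hz ha u hu v hv
      · exact (hsplit P Q hPQ hz ha v hv u hu).symm
    · exact hmixed u hu v hv
    · exact (hmixed v hv u hu).symm
    · exact (h.joinedAcross hu hv huv).mono (le_sup_right.trans hH) hM

theorem sup_openEar (h : IsMarking H M) (hq : q.IsPath) (hqH : Disjoint q.toSubgraph H)
    (hw : w ∈ H.verts) (hb : b ∈ H.verts) (hzw : G.Adj z w) (hab : G.Adj a b) (hwb : w ≠ b) :
    IsMarking (G.subgraphOfAdj hzw ⊔ (G.subgraphOfAdj hab ⊔ q.toSubgraph ⊔ H)) M := by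
  have hz : z ∈ q.toSubgraph.verts := q.start_mem_verts_toSubgraph
  have ha : a ∈ q.toSubgraph.verts := q.end_mem_verts_toSubgraph
  have hzM : z ∉ M.verts := fun hzM =>
    Set.disjoint_left.1 (Subgraph.disjoint_verts_iff_disjoint.2 hqH) hz (h.verts_subset hzM)
  set H' := G.subgraphOfAdj hzw ⊔ (G.subgraphOfAdj hab ⊔ q.toSubgraph ⊔ H) with hH'
  have hzw_le : G.subgraphOfAdj hzw.symm ≤ H' := (subgraphOfAdj_symm hzw).trans_le le_sup_left
  have hab_le : G.subgraphOfAdj hab.symm ≤ H' :=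
    (subgraphOfAdj_symm hab).trans_le (le_sup_left.trans (le_sup_left.trans le_sup_right))
  have hq_le : q.toSubgraph ≤ H' := le_sup_right.trans (le_sup_left.trans le_sup_right)
  have hH_le : H ≤ H' := le_sup_right.trans le_sup_right
  have hverts : H'.verts = q.toSubgraph.verts ∪ H.verts := by
    rw [hH', Subgraph.verts_sup, verts_subgraphOfAdj_sup ha hb hab, subgraphOfAdj_verts]
    exact Set.union_eq_self_of_subset_left (Set.pair_subset (.inl hz) (.inr hw))
  refine h.of_ear hq hb hab le_sup_right hverts le_rfl (h.verts_subset.trans hH_le.1) ?_ ?_ ?_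
  · rw [hH', Subgraph.edgeSet_sup, Set.disjoint_union_left]
    exact ⟨disjoint_edgeSet_subgraphOfAdj hzM hzw, h.disjoint_edgeSet_ear hqH hab⟩
  · intro u hu v hv
    rcases eq_or_ne w v with rfl | hwv
    · exact ((h.joinedAcross hb hw hwb.symm).attach q.toSubgraph_connected hqH.symm ha hu
        hab.symm).mono (sup_le (sup_le hab_le hH_le) hq_le) le_rfl
    · exact ((h.joinedAcross hw hv hwv).attach q.toSubgraph_connected hqH.symm hz hu
        hzw.symm).mono (sup_le (sup_le hzw_le hH_le) hq_le) le_rfl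
  · intro P Q hPQ hzP haQ u hu v hv
    have hub := (h.joinedAcross hw hb hwb).attach hPQ.left_connected
      (hqH.symm.mono_right hPQ.left_le) hzP hu hzw.symm
    have hdisj : Disjoint (G.subgraphOfAdj hzw.symm ⊔ H ⊔ P) Q :=
      disjoint_subgraphOfAdj_sup hw hzP _ (hqH.symm.mono_right hPQ.right_le) hPQ.disjoint
    exact (hub.symm.attach hPQ.right_connected hdisj haQ hv hab.symm).symm.mono
      (sup_le (sup_le hab_le (sup_le (sup_le hzw_le hH_le) (hPQ.left_le.trans hq_le)))
        (hPQ.right_le.trans hq_le)) le_rfl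

theorem sup_closedEar (h : IsMarking H M) (hq : q.IsPath) (hqH : Disjoint q.toSubgraph H)
    (hw : w ∈ H.verts) (hzw : G.Adj z w) (haw : G.Adj a w) (hza : z ≠ a) :
    IsMarking (G.subgraphOfAdj haw ⊔ q.toSubgraph ⊔ H) (G.subgraphOfAdj hzw ⊔ M) := by
  have hz : z ∈ q.toSubgraph.verts := q.start_mem_verts_toSubgraph
  have ha : a ∈ q.toSubgraph.verts := q.end_mem_verts_toSubgraph
  have hqH' : Disjoint q.toSubgraph.verts H.verts := Subgraph.disjoint_verts_iff_disjoint.2 hqH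
  have hverts := verts_subgraphOfAdj_sup ha hw haw
  have hzw' : (G.subgraphOfAdj hzw ⊔ M).Adj z w := by simp
  have hq_le : q.toSubgraph ≤ G.subgraphOfAdj haw ⊔ q.toSubgraph ⊔ H :=
    le_sup_right.trans le_sup_left
  refine h.of_ear hq hw haw le_rfl hverts le_sup_right ?_ ?_ ?_ ?_
  · rw [hverts, Subgraph.verts_sup, subgraphOfAdj_verts]
    exact Set.union_subset (Set.pair_subset (.inl hz) (.inr hw))
      (h.verts_subset.trans Set.subset_union_right)
  · rw [Subgraph.edgeSet_sup (H₁ := G.subgraphOfAdj hzw), Set.disjoint_union_right]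
    refine ⟨?_, h.disjoint_edgeSet_ear hqH haw⟩
    have hzH : z ∉ H.verts := hqH'.notMem_of_mem_left hz
    have hwq : w ∉ q.toSubgraph.verts := hqH'.notMem_of_mem_right hw
    rw [edgeSet_subgraphOfAdj, Set.disjoint_singleton_right]
    rintro ((hadj | hadj) | hadj)
    · exact hza (Sym2.congr_left.1 hadj).symm
    · exact hwq (q.toSubgraph.edge_vert hadj.symm)
    · exact hzH (H.edge_vert hadj)
  · intro u hu v hv
    exact ⟨q.toSubgraph, H, ⟨hq_le, le_sup_right, q.toSubgraph_connected, h.connected, hqH⟩,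
      hu, hv, z, hz, w, hw, hzw'⟩
  · intro P Q hPQ hzP haQ u hu v hv
    exact ⟨P, _, (hPQ.symm.attach h.connected hqH haQ hw haw).symm, hu, .inl (.inr hv), z, hzP, w,
      .inr hw, hzw'⟩

end IsMarking

theorem exists_isPath_disjoint_of_walk {H : G.Subgraph} {z w : V} (p : G.Walk z w)
    (hz : z ∉ H.verts) (hw : w ∈ H.verts) :
    ∃ (a b : V) (q : G.Walk z a), q.IsPath ∧ Disjoint q.toSubgraph H ∧ b ∈ H.verts ∧
      s(a, b) ∈ p.edges := by
  classical
  suffices ∃ (a b : V) (q : G.Walk z a), Disjoint q.toSubgraph H ∧ b ∈ H.verts ∧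
      s(a, b) ∈ p.edges by
    obtain ⟨a, b, q, hq, hb, hab⟩ := this
    exact ⟨a, b, q.bypass, q.bypass_isPath, hq.mono_left Walk.toSubgraph_bypass_le_toSubgraph,
      hb, hab⟩
  induction p with
  | nil => exact absurd hw hz
  | @cons z y w h p ih =>
    by_cases hy : y ∈ H.verts
    · refine ⟨z, y, .nil, ?_, hy, by simp⟩
      simpa [← Subgraph.disjoint_verts_iff_disjoint]
    · obtain ⟨a, b, q, hq, hb, hab⟩ := ih hy hw
      refine ⟨a, b, .cons h q, ?_, hb, by simp [hab]⟩
      rw [← Subgraph.disjoint_verts_iff_disjoint] at hq ⊢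
      simp_all

theorem exists_ear (hG : G.Preconnected) (hGb : ∀ e, ¬ G.IsBridge e) {H : G.Subgraph}
    (hne : H.verts.Nonempty) (hH : ¬ H.IsSpanning) :
    ∃ (z w a b : V) (q : G.Walk z a), q.IsPath ∧ Disjoint q.toSubgraph H ∧ w ∈ H.verts ∧
      b ∈ H.verts ∧ G.Adj z w ∧ G.Adj a b ∧ s(a, b) ≠ s(z, w) := by
  obtain ⟨v, hv⟩ := hne
  obtain ⟨x, hx⟩ := not_forall.1 hH
  obtain ⟨p⟩ := hG v x
  obtain ⟨⟨⟨w, z⟩, hwz⟩, -, hw, hz⟩ := p.exists_boundary_dart H.verts hv hx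
  have hreach : (G.deleteEdges {s(z, w)}).Reachable z w := not_not.1 (hGb s(z, w))
  obtain ⟨r, hr⟩ := reachable_deleteEdges_iff_exists_walk.1 hreach
  obtain ⟨a, b, q, hq, hqH, hbH, hab⟩ := exists_isPath_disjoint_of_walk r hz hw
  exact ⟨z, w, a, b, q, hq, hqH, hw, hbH, hwz.symm, r.adj_of_mem_edges hab, fun h => hr (h ▸ hab)⟩

theorem isMarking_sSup {c : Set (G.Subgraph × G.Subgraph)} (hc : DirectedOn (· ≤ ·) c)
    (hne : c.Nonempty) (h : ∀ K ∈ c, IsMarking K.1 K.2) : IsMarking (sSup c).1 (sSup c).2 := by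
  have hle : ∀ K ∈ c, K.1 ≤ (sSup c).1 ∧ K.2 ≤ (sSup c).2 := fun K hK => le_sSup hK
  have hmem : ∀ {u}, u ∈ (sSup c).1.verts → ∃ K ∈ c, u ∈ K.1.verts := by
    simp [Prod.fst_sSup]
  have hcommon : ∀ {u}, u ∈ (sSup c).1.verts → ∀ {v}, v ∈ (sSup c).1.verts →
      ∃ K ∈ c, u ∈ K.1.verts ∧ v ∈ K.1.verts := fun hu _ hv => by
    obtain ⟨K, hK, hu⟩ := hmem hu
    obtain ⟨L, hL, hv⟩ := hmem hv
    obtain ⟨N, hN, hKN, hLN⟩ := hc K hK L hL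
    exact ⟨N, hN, hKN.1.1 hu, hLN.1.1 hv⟩
  refine ⟨(Subgraph.connected_iff_forall_exists_walk_subgraph _).2 ⟨?_, fun hu hv => ?_⟩, ?_, ?_,
    fun u hu v hv huv => ?_⟩
  · obtain ⟨K, hK⟩ := hne
    exact (h K hK).connected.nonempty.mono (hle K hK).1.1
  · obtain ⟨K, hK, hu, hv⟩ := hcommon hu hv
    obtain ⟨p, hp⟩ := ((Subgraph.connected_iff_forall_exists_walk_subgraph _).1
      (h K hK).connected).2 hu hv
    exact ⟨p, hp.trans (hle K hK).1⟩
  · simpa [Prod.snd_sSup] using fun M H hHM =>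
      (h (H, M) hHM).verts_subset.trans (hle (H, M) hHM).1.1
  · rw [Prod.fst_sSup, Prod.snd_sSup, Subgraph.edgeSet_sSup, Subgraph.edgeSet_sSup,
      Set.biUnion_image, Set.biUnion_image]
    refine Set.disjoint_iUnion₂_left.2 fun K hK => Set.disjoint_iUnion₂_right.2 fun L hL => ?_
    obtain ⟨N, hN, hKN, hLN⟩ := hc K hK L hL
    exact (h N hN).disjoint_edgeSet.mono (Subgraph.edgeSet_mono hKN.1) (Subgraph.edgeSet_mono hLN.2)
  · obtain ⟨K, hK, hu, hv⟩ := hcommon hu hv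
    exact ((h K hK).joinedAcross hu hv huv).mono (hle K hK).1 (hle K hK).2

theorem exists_isMarking_isSpanning (hG : G.Connected) (hGb : ∀ e, ¬ G.IsBridge e) :
    ∃ H M : G.Subgraph, IsMarking H M ∧ H.IsSpanning := by
  obtain ⟨v⟩ := hG.nonempty
  obtain ⟨⟨H, M⟩, -, ⟨hHM, hmax⟩⟩ := zorn_le_nonempty₀
    {K : G.Subgraph × G.Subgraph | IsMarking K.1 K.2}
    (fun c hcs hc K hK => ⟨sSup c, isMarking_sSup hc.directedOn ⟨K, hK⟩ hcs, fun _ => le_sSup⟩)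
    (_, ⊥) (isMarking_singletonSubgraph_bot v)
  refine ⟨H, M, hHM, by_contra fun hH => ?_⟩
  obtain ⟨z, w, a, b, q, hq, hqH, hw, hb, hzw, hab, hne⟩ :=
    exists_ear hG.preconnected hGb hHM.connected.nonempty hH
  have hz : z ∉ H.verts := fun hz => Set.disjoint_left.1
    (Subgraph.disjoint_verts_iff_disjoint.2 hqH) q.start_mem_verts_toSubgraph hz
  rcases eq_or_ne w b with rfl | hwb
  · have hza : z ≠ a := by
      rintro rfl
      exact hne rfl
    have hle := hmax (y := (_, _)) (hHM.sup_closedEar hq hqH hw hzw hab hza)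
      ⟨le_sup_right, le_sup_right⟩
    exact hz (hle.1.1 (by simp))
  · have hle := hmax (y := (_, _)) (hHM.sup_openEar hq hqH hw hb hzw hab hwb)
      ⟨le_sup_right.trans le_sup_right, le_rfl⟩
    exact hz (hle.1.1 (by simp))

theorem IsMarking.exists_isCFCColoring {H M : G.Subgraph} (h : IsMarking H M)
    (hH : H.IsSpanning) : ∃ c : Sym2 V → ℕ, (∀ e, c e < 2) ∧ IsCFCColoring G c := by
  classical
  refine ⟨fun e => if e ∈ M.edgeSet then 1 else 0, fun e => by grind, fun u v huv => ?_⟩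
  obtain ⟨p, e, ⟨he, heM⟩, huniq⟩ :=
    (h.joinedAcross (hH u) (hH v) huv).exists_path h.disjoint_edgeSet
  refine ⟨p, e, he, fun e' he' hc => huniq e' ⟨he', ?_⟩⟩
  by_contra he'M
  simp [heM, he'M] at hc

theorem IsCFCColoring.eq_top_of_constant {c : Sym2 V → ℕ} (h : IsCFCColoring G c)
    (hc : ∀ e ∈ G.edgeSet, ∀ e' ∈ G.edgeSet, c e = c e') : G = ⊤ := by
  ext u v
  refine ⟨Adj.ne, fun huv => ?_⟩
  obtain ⟨⟨p, hp⟩, e, he, huniq⟩ := h u v huv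
  have hall : p.edges = List.replicate p.edges.length e :=
    List.eq_replicate_of_mem fun e' he' => huniq e' he' <|
      hc e' (p.edges_subset_edgeSet he') e (p.edges_subset_edgeSet he)
  have hle : p.edges.length ≤ 1 := List.nodup_replicate.1 (hall ▸ hp.isTrail.edges_nodup)
  have hpos : 0 < p.edges.length := List.length_pos_of_mem he
  exact p.adj_of_length_eq_one (by rw [← p.length_edges]; omega)

theorem cfcNum_eq_two (hG : G.Connected) (hGb : ∀ e, ¬ G.IsBridge e) (hne : G ≠ ⊤) :
    cfcNum G = 2 := by
  obtain ⟨H, M, hHM, hH⟩ := exists_isMarking_isSpanning hG hGb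
  obtain ⟨c, hc2, hc⟩ := hHM.exists_isCFCColoring hH
  have hmem : 2 ∈ {k | ∃ c : Sym2 V → ℕ, (∀ e ∈ G.edgeSet, c e < k) ∧ IsCFCColoring G c} :=
    ⟨c, fun e _ => hc2 e, hc⟩
  refine le_antisymm (Nat.sInf_le hmem) (le_csInf ⟨2, hmem⟩ ?_)
  rintro k ⟨c, hck, hc⟩
  by_contra! hk
  exact hne (hc.eq_top_of_constant fun e he e' he' => by
    have := hck e he
    have := hck e' he'
    omega)

theorem ne_top_of_connected_compl [Nontrivial V] (h : Gᶜ.Connected) : G ≠ ⊤ := by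
  rintro rfl
  exact not_connected_bot (compl_top (α := SimpleGraph V) ▸ h)

theorem cfcNum_add_mul_compl_of_twoEdgeConnected_general [Nontrivial V] (hG : G.Connected)
    (hGb : ∀ e, ¬ G.IsBridge e) (hGc : Gᶜ.Connected) (hGcb : ∀ e, ¬ Gᶜ.IsBridge e) :
    cfcNum G + cfcNum Gᶜ = 4 ∧ cfcNum G * cfcNum Gᶜ = 4 := by
  have hG2 : cfcNum G = 2 := cfcNum_eq_two hG hGb (ne_top_of_connected_compl hGc)
  have hGc2 : cfcNum Gᶜ = 2 :=
    cfcNum_eq_two hGc hGcb (ne_top_of_connected_compl ((compl_compl G).symm ▸ hG))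
  simp [hG2, hGc2]

end

/-- If G and its complement are both 2-edge-connected on n ≥ 5 vertices, then
cfc(G) + cfc(Ḡ) = 4 and cfc(G) · cfc(Ḡ) = 4. -/
theorem cfcNum_add_mul_compl_of_twoEdgeConnected {V : Type*} [Fintype V]
    (G : SimpleGraph V) (n : ℕ) (hn : Fintype.card V = n) (h5 : 5 ≤ n)
    (hG : G.Connected) (hGb : ∀ e : Sym2 V, ¬ G.IsBridge e)
    (hGc : Gᶜ.Connected) (hGcb : ∀ e : Sym2 V, ¬ Gᶜ.IsBridge e) :
    cfcNum G + cfcNum Gᶜ = 4 ∧ cfcNum G * cfcNum Gᶜ = 4 := by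
  have : Nontrivial V := Fintype.one_lt_card_iff_nontrivial.1 (by omega)
  exact cfcNum_add_mul_compl_of_twoEdgeConnected_general hG hGb hGc hGcb
end

section
/- Let G be a 2-edge-connected simple graph on n ≥ 5 vertices whose complement Ḡ is connected with edge-connectivity 1 (i.e., Ḡ has a cut-edge). Then 4 ≤ cfc(G) + cfc(Ḡ) ≤ n and 4 ≤ cfc(G) · cfc(Ḡ) ≤ 2(n − 2). Moreover, cfc(G) + cfc(Ḡ) = n if and only if Ḡ is isomorphic to the path P_5, and cfc(G) · cfc(Ḡ) = 2(n − 2) if and only if Ḡ is isomorphic to the path P_5. -/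
open SimpleGraph

/-!
A connected bridgeless graph has conflict-free connection number at most 2: grow, ear by ear, a
vertex set `S` together with a set `F` of edges inside `S` such that any two vertices of `S` are
joined inside `S` both by a path avoiding `F` and by a path using exactly one edge of `F`; an ear
is a detour avoiding `F` that leaves `S` through an edge and returns to `S`. Once `S` is everything,
color by membership in `F`.

Since `G` is bridgeless, every vertex has at least two non-neighbors in `Gᶜ`. If `n ≥ 6`, a
spanning tree of `Gᶜ` then contains three disjoint edges or two disjoint paths with two edges each.
Coloring the groups alike and all the other edges differently saves two of the `n - 1` colors, and
it is conflict-free because a path without a unique color cannot leave its group. So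
`cfcNum Gᶜ ≤ n - 3`. If `n = 5`, then `Gᶜ` has maximum degree at most 2, so it is `P_5`, with
`cfcNum Gᶜ = 3 = n - 2`, or it is Hamiltonian, hence bridgeless, and `cfcNum Gᶜ = 2 = n - 3`.
-/

section Basic

variable {V W : Type*} {G H : SimpleGraph V} {K : SimpleGraph W} {k : ℕ}

/-- `G` has a conflict-free connected edge-coloring with the `k` colors `0, …, k - 1`; by
definition `cfcNum G` is the least such `k`. -/
def CFCColorable (G : SimpleGraph V) (k : ℕ) : Prop :=
  ∃ c : Sym2 V → ℕ, (∀ e ∈ G.edgeSet, c e < k) ∧ IsCFCColoring G c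

lemma CFCColorable.cfcNum_le (h : CFCColorable G k) : cfcNum G ≤ k :=
  Nat.sInf_le h

lemma CFCColorable.cfcColorable_cfcNum (h : CFCColorable G k) : CFCColorable G (cfcNum G) :=
  Nat.sInf_mem (s := {k | CFCColorable G k}) ⟨k, h⟩

lemma CFCColorable.two_le {u v : V} (h : CFCColorable G k) (huv : u ≠ v) (hadj : ¬ G.Adj u v) :
    2 ≤ k := by
  obtain ⟨c, hk, hc⟩ := h
  by_contra! hlt
  obtain ⟨⟨p, hp⟩, e, he, huniq⟩ := hc u v huv
  have hall : ∀ e' ∈ p.edges, e' = e := fun e' he' ↦ huniq e' he' <| by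
    have := hk e' (p.edges_subset_edgeSet he')
    have := hk e (p.edges_subset_edgeSet he)
    omega
  match p with
  | .nil => exact huv rfl
  | .cons h .nil => exact hadj h
  | .cons h₁ (.cons h₂ q) =>
    have hnodup := hp.isTrail.edges_nodup
    simp only [Walk.edges_cons, List.nodup_cons, List.mem_cons, forall_eq_or_imp] at hnodup hall
    exact hnodup.1 (Or.inl (hall.1.trans hall.2.1.symm))

lemma CFCColorable.two_le_cfcNum {u v : V} (h : CFCColorable G k) (huv : u ≠ v)
    (hadj : ¬ G.Adj u v) : 2 ≤ cfcNum G :=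
  h.cfcColorable_cfcNum.two_le huv hadj

lemma CFCColorable.mono (hGH : G ≤ H) (h : CFCColorable G k) : CFCColorable H k := by
  obtain ⟨c, hk, hc⟩ := h
  refine ⟨fun e ↦ min (c e) (k - 1), ?_, fun u v huv ↦ ?_⟩
  · rintro ⟨u, v⟩ huv
    obtain ⟨p, e, he, -⟩ := hc u v (H.ne_of_adj huv)
    have := hk e (p.1.edges_subset_edgeSet he)
    dsimp only
    omega
  · obtain ⟨p, e, he, huniq⟩ := hc u v huv
    refine ⟨⟨p.1.mapLe hGH, p.2.mapLe hGH⟩, e, by simpa using he, ?_⟩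
    simp only [Walk.edges_mapLe_eq_edges]
    intro e' he' heq
    have := hk e (p.1.edges_subset_edgeSet he)
    have := hk e' (p.1.edges_subset_edgeSet he')
    exact huniq e' he' (by omega)

lemma IsCFCColoring.of_iso (f : G ≃g K) {c : Sym2 W → ℕ} (hc : IsCFCColoring K c) :
    IsCFCColoring G (c ∘ Sym2.map f) := by
  intro u v huv
  obtain ⟨⟨p, hp⟩, e, he, huniq⟩ := hc (f u) (f v) (f.injective.ne huv)
  have hinv (d : Sym2 W) : Sym2.map f (Sym2.map f.symm d) = d := by
    simp [Sym2.map_map]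
  refine ⟨⟨(p.map f.symm.toHom).copy (by simp) (by simp), ?_⟩, e.map f.symm, ?_, ?_⟩
  · simpa using hp.map f.symm.injective
  · simpa using ⟨e, he, rfl⟩
  · simp only [Walk.edges_copy, Walk.edges_map, List.mem_map, Function.comp_apply]
    rintro _ ⟨d, hd, rfl⟩ hcd
    exact congrArg (Sym2.map f.symm) (huniq d hd ((congrArg c (hinv d)).symm.trans
      (hcd.trans (congrArg c (hinv e)))))

lemma CFCColorable.of_iso (f : G ≃g K) : CFCColorable K k → CFCColorable G k := by
  rintro ⟨c, hk, hc⟩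
  refine ⟨c ∘ Sym2.map f, ?_, hc.of_iso f⟩
  rintro ⟨a, b⟩ h
  exact hk _ (f.map_adj_iff.2 h)

lemma cfcNum_congr (f : G ≃g K) : cfcNum G = cfcNum K :=
  congrArg sInf (Set.ext fun _ ↦ ⟨CFCColorable.of_iso f.symm, CFCColorable.of_iso f⟩)

end Basic

section DisjointEdgeGroups

variable {V ι κ : Type*} {G : SimpleGraph V} {e : ι → κ → Sym2 V}

/-- Pairwise vertex-disjoint groups of edges of `G`, the group `i` consisting of the distinct edges
`e i k`. Using the same colors on each group saves `#κ` colors per additional group. -/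
structure IsDisjointEdgeGroups (G : SimpleGraph V) (e : ι → κ → Sym2 V) : Prop where
  mem_edgeSet (i : ι) (k : κ) : e i k ∈ G.edgeSet
  injective (i : ι) : Function.Injective (e i)
  eq_of_mem {i j : ι} {k l : κ} {x : V} : x ∈ e i k → x ∈ e j l → i = j

namespace IsDisjointEdgeGroups

lemma eq_of_eq (he : IsDisjointEdgeGroups G e) {i j : ι} {k l : κ} (h : e i k = e j l) : i = j :=
  he.eq_of_mem (e i k).out_fst_mem (by rw [← h]; exact (e i k).out_fst_mem)

lemma uncurry_injective (he : IsDisjointEdgeGroups G e) :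
    Function.Injective (Function.uncurry e) := by
  rintro ⟨i, k⟩ ⟨j, l⟩ h
  obtain rfl : i = j := he.eq_of_eq h
  exact Prod.ext rfl (he.injective i h)

lemma forall_mem_edges (he : IsDisjointEdgeGroups G e) {u v : V} {i : ι} {k : κ} (hu : u ∈ e i k)
    (p : G.Walk u v) (hp : ∀ d ∈ p.edges, ∃ i k, d = e i k) : ∀ d ∈ p.edges, ∃ l, d = e i l := by
  induction p generalizing k with
  | nil => simp
  | @cons u w v h q ih =>
    simp only [Walk.edges_cons, List.mem_cons, forall_eq_or_imp] at hp ⊢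
    obtain ⟨⟨j, l, hjl⟩, hq⟩ := hp
    obtain rfl : i = j := he.eq_of_mem hu (hjl ▸ Sym2.mem_mk_left u w)
    exact ⟨⟨l, hjl⟩, ih (hjl ▸ Sym2.mem_mk_right u w) hq⟩

/-- A path without a unique color stays inside one group, whose edges have distinct colors. -/
lemma isCFCColoring (he : IsDisjointEdgeGroups G e) (hG : G.Connected) {c : Sym2 V → ℕ}
    (hc : ∀ d ∈ G.edgeSet, ∀ d' ∈ G.edgeSet, c d = c d' →
      d = d' ∨ ∃ i j k, d = e i k ∧ d' = e j k) : IsCFCColoring G c := by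
  intro u v huv
  obtain ⟨p, hp⟩ := (hG u v).exists_isPath
  refine ⟨⟨p, hp⟩, ?_⟩
  by_contra! hrep
  have hmem (d) (hd : d ∈ p.edges) : ∃ d' ∈ p.edges, d' ≠ d ∧ ∃ i j k, d = e i k ∧ d' = e j k := by
    obtain ⟨d', hd', heq, hne⟩ := hrep d hd
    exact ⟨d', hd', hne, (hc d (p.edges_subset_edgeSet hd) d' (p.edges_subset_edgeSet hd')
      heq.symm).resolve_left hne.symm⟩
  cases p with
  | nil => exact huv rfl
  | @cons _ w _ h q =>
    obtain ⟨d', hd', hne, i, j, k, hd, rfl⟩ := hmem s(u, w) (by simp)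
    have hu : u ∈ e i k := hd ▸ Sym2.mem_mk_left u w
    obtain ⟨l, hl⟩ := he.forall_mem_edges hu _
      (fun d hd ↦ let ⟨_, _, _, i, _, k, hik, _⟩ := hmem d hd; ⟨i, k, hik⟩) _ hd'
    obtain rfl : j = i := he.eq_of_eq hl
    exact hne hd.symm

end IsDisjointEdgeGroups

lemma exists_coloring_eq_on_groups {α : Type*} [Fintype α] [Fintype ι] [Fintype κ]
    {f : ι × κ → α} (hf : Function.Injective f) :
    ∃ c : α → Fin (Fintype.card α - Fintype.card ι * Fintype.card κ + Fintype.card κ),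
      ∀ a a', c a = c a' → a = a' ∨ ∃ i j k, a = f (i, k) ∧ a' = f (j, k) := by
  classical
  have hcard : Fintype.card ({a // a ∉ Set.range f} ⊕ κ) =
      Fintype.card α - Fintype.card ι * Fintype.card κ + Fintype.card κ := by
    rw [Fintype.card_sum, Fintype.card_subtype_compl, ← Fintype.card_prod,
      ← Set.card_range_of_injective hf]
  refine ⟨fun a ↦ Fintype.equivFinOfCardEq hcard <|
    if h : a ∈ Set.range f then .inr h.choose.2 else .inl ⟨a, h⟩, fun a a' h ↦ ?_⟩
  replace h := (Fintype.equivFinOfCardEq hcard).injective h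
  split_ifs at h with ha ha'
  · exact Or.inr ⟨ha.choose.1, ha'.choose.1, ha.choose.2, ha.choose_spec.symm,
      (Sum.inr_injective h) ▸ ha'.choose_spec.symm⟩
  · exact Or.inl (congrArg Subtype.val (Sum.inl_injective h))

lemma IsDisjointEdgeGroups.cfcColorable [Fintype G.edgeSet] [Fintype ι] [Fintype κ]
    (he : IsDisjointEdgeGroups G e) (hG : G.Connected) :
    CFCColorable G
      (G.edgeFinset.card - Fintype.card ι * Fintype.card κ + Fintype.card κ) := by
  classical
  obtain ⟨c, hc⟩ := exists_coloring_eq_on_groups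
    (f := fun x : ι × κ ↦ (⟨e x.1 x.2, he.mem_edgeSet x.1 x.2⟩ : G.edgeSet))
    fun x y h ↦ he.uncurry_injective (congrArg Subtype.val h)
  rw [edgeFinset_card]
  refine ⟨fun d ↦ if h : d ∈ G.edgeSet then c ⟨d, h⟩ else 0, fun d hd ↦ ?_,
    he.isCFCColoring hG fun d hd d' hd' h ↦ ?_⟩
  · simp only [hd, dif_pos, Fin.is_lt]
  · simp only [hd, hd', dif_pos] at h
    simpa using hc _ _ (Fin.ext h)

end DisjointEdgeGroups

section MatchingOrPaths

variable {V : Type*} {G : SimpleGraph V}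

/-- `G` contains three pairwise disjoint edges `ab`, `cd`, `xy`. -/
def HasMatchingThree (G : SimpleGraph V) : Prop :=
  ∃ a b c d x y, G.Adj a b ∧ G.Adj c d ∧ G.Adj x y ∧ [a, b, c, d, x, y].Nodup

/-- `G` contains two vertex-disjoint paths `abc`, `xyz` on three vertices each. -/
def HasTwoPathThree (G : SimpleGraph V) : Prop :=
  ∃ a b c x y z, G.Adj a b ∧ G.Adj b c ∧ G.Adj x y ∧ G.Adj y z ∧ [a, b, c, x, y, z].Nodup

lemma HasMatchingThree.exists_isDisjointEdgeGroups (h : HasMatchingThree G) :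
    ∃ e : Fin 3 → Unit → Sym2 V, IsDisjointEdgeGroups G e := by
  obtain ⟨a, b, c, d, x, y, hab, hcd, hxy, hn⟩ := h
  simp only [List.nodup_cons, List.mem_cons, List.not_mem_nil, List.nodup_nil, not_or, or_false,
    not_false_eq_true, and_true] at hn
  refine ⟨fun i _ ↦ ![s(a, b), s(c, d), s(x, y)] i, ?_,
    fun _ ↦ Function.injective_of_subsingleton _, ?_⟩
  · simp [Fin.forall_fin_succ, hab, hcd, hxy]
  · intro i j _ _ z
    fin_cases i <;> fin_cases j <;>
      simp only [Fin.zero_eta, Fin.mk_one, Fin.reduceFinMk, Matrix.cons_val, Sym2.mem_iff] <;>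
        grind

lemma HasTwoPathThree.exists_isDisjointEdgeGroups (h : HasTwoPathThree G) :
    ∃ e : Fin 2 → Fin 2 → Sym2 V, IsDisjointEdgeGroups G e := by
  obtain ⟨a, b, c, x, y, z, hab, hbc, hxy, hyz, hn⟩ := h
  simp only [List.nodup_cons, List.mem_cons, List.not_mem_nil, List.nodup_nil, not_or, or_false,
    not_false_eq_true, and_true] at hn
  refine ⟨![![s(a, b), s(b, c)], ![s(x, y), s(y, z)]], ?_, fun i k l ↦ ?_, ?_⟩
  · simp [Fin.forall_fin_succ, hab, hbc, hxy, hyz]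
  · fin_cases i <;> fin_cases k <;> fin_cases l <;>
      simp only [Fin.zero_eta, Fin.mk_one, Matrix.cons_val, Sym2.eq_iff] <;>
        grind
  · intro i j k l w
    fin_cases i <;> fin_cases j <;> fin_cases k <;> fin_cases l <;>
      simp only [Fin.zero_eta, Fin.mk_one, Matrix.cons_val, Sym2.mem_iff] <;>
        grind

lemma exists_adj_of_connected (hG : G.Connected) {S : Set V} {u v : V} (hu : u ∈ S)
    (hv : v ∉ S) : ∃ x ∈ S, ∃ y ∉ S, G.Adj x y := by
  obtain ⟨p⟩ := hG u v
  obtain ⟨d, -, hd⟩ := p.exists_boundary_dart S hu hv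
  exact ⟨d.fst, hd.1, d.snd, hd.2, d.adj⟩

lemma exists_disjoint_edges_of_connected (hG : G.Connected) (hdom : ∀ v, ∃ w, Gᶜ.Adj v w) :
    ∃ a b c d, G.Adj a b ∧ G.Adj c d ∧ [a, b, c, d].Nodup := by
  by_contra! hcon
  obtain ⟨a⟩ := hG.nonempty
  have : Nontrivial V := let ⟨w, hw⟩ := hdom a; ⟨a, w, hw.ne⟩
  have hattach {a b : V} (hab : G.Adj a b) : ∃ w, w ≠ a ∧ ¬ G.Adj a w ∧ G.Adj b w := by
    obtain ⟨w, hne, haw⟩ := hdom a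
    obtain ⟨x, hx⟩ := hG.preconnected.exists_adj_of_nontrivial w
    refine ⟨w, hne.symm, haw, by_contra fun hbw ↦ hcon a b w x hab hx ?_⟩
    grind [G.adj_comm, G.ne_of_adj]
  obtain ⟨b, hab⟩ := hG.preconnected.exists_adj_of_nontrivial a
  obtain ⟨w, hwa, haw, hbw⟩ := hattach hab
  obtain ⟨z, hzb, -, haz⟩ := hattach hab.symm
  have hwz : w ≠ z := ne_of_apply_ne (G.Adj a) fun h ↦ haw (h ▸ haz)
  refine hcon a z b w haz hbw ?_
  grind [G.ne_of_adj]

lemma hasTwoPathThree_of_attached (hG : G.Connected) (h3 : ¬ HasMatchingThree G)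
    (hdom : ∀ v w, ∃ z ≠ w, Gᶜ.Adj v z) {a b c d u u' : V} (hab : G.Adj a b) (hcd : G.Adj c d)
    (hn : [a, b, c, d, u, u'].Nodup) (hua : G.Adj u a)
    (hout : ∀ w ∉ [a, b, c, d], (G.Adj w a ∨ G.Adj w b) ∧ ¬ G.Adj w c ∧ ¬ G.Adj w d) :
    HasTwoPathThree G := by
  simp only [List.nodup_cons, List.mem_cons, List.not_mem_nil, List.nodup_nil, not_or, or_false,
    not_false_eq_true, and_true] at hn hout
  have hnb {w w' : V} (hw : w ≠ a ∧ w ≠ b ∧ w ≠ c ∧ w ≠ d) (hw' : w' ≠ a ∧ w' ≠ b ∧ w' ≠ c ∧ w' ≠ d)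
      (hne : w ≠ w') (hwa : G.Adj w a) : ¬ G.Adj w' b := fun hwb ↦
    h3 ⟨w, a, w', b, c, d, hwa, hwb, hcd, by grind⟩
  have hall {w : V} (hw : w ≠ a ∧ w ≠ b ∧ w ≠ c ∧ w ≠ d) : G.Adj a w := by
    by_cases hwu : w = u
    · exact hwu ▸ hua.symm
    · exact ((hout w hw).1.resolve_right (hnb (by grind) hw (Ne.symm hwu) hua)).symm
  have hac : ¬ G.Adj a c := by
    obtain ⟨z, hzd, hz⟩ := hdom a d
    grind [compl_adj]
  have had : ¬ G.Adj a d := by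
    obtain ⟨z, hzc, hz⟩ := hdom a c
    grind [compl_adj]
  obtain ⟨x, hx, y, hy, hxy⟩ := exists_adj_of_connected hG (S := {c, d}) (u := c) (v := a)
    (by simp) (by grind)
  simp only [Set.mem_insert_iff, Set.mem_singleton_iff, not_or] at hx hy
  obtain rfl : y = b := by grind [G.adj_comm]
  have hau' : G.Adj a u' := hall (by grind)
  rcases hx with rfl | rfl
  · exact ⟨u, a, u', y, x, d, hua, hau', hxy.symm, hcd, by grind⟩
  · exact ⟨u, a, u', y, x, c, hua, hau', hxy.symm, hcd.symm, by grind⟩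

lemma adj_of_not_hasMatchingThree [Nontrivial V] (hG : G.Connected) (h3 : ¬ HasMatchingThree G)
    {a b c d : V} (hab : G.Adj a b) (hcd : G.Adj c d) (hn : [a, b, c, d].Nodup) {w : V}
    (hw : w ∉ [a, b, c, d]) : (G.Adj w a ∨ G.Adj w b) ∨ (G.Adj w c ∨ G.Adj w d) := by
  obtain ⟨x, hx⟩ := hG.preconnected.exists_adj_of_nontrivial w
  by_contra! hcon
  refine h3 ⟨a, b, c, d, w, x, hab, hcd, hx, ?_⟩
  simp only [List.nodup_cons, List.mem_cons, List.not_mem_nil, List.nodup_nil, not_or, or_false,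
    not_false_eq_true, and_true] at hw hn ⊢
  grind [G.ne_of_adj]

lemma hasTwoPathThree_of_adj_of_adj {a b c d u v : V} (hab : G.Adj a b) (hcd : G.Adj c d)
    (hn : [a, b, c, d, u, v].Nodup) (hu : G.Adj u a ∨ G.Adj u b) (hv : G.Adj v c ∨ G.Adj v d) :
    HasTwoPathThree G := by
  simp only [List.nodup_cons, List.mem_cons, List.not_mem_nil, List.nodup_nil, not_or, or_false,
    not_false_eq_true, and_true] at hn
  rcases hu with hu | hu <;> rcases hv with hv | hv
  · exact ⟨u, a, b, v, c, d, hu, hab, hv, hcd, by grind⟩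
  · exact ⟨u, a, b, v, d, c, hu, hab, hv, hcd.symm, by grind⟩
  · exact ⟨u, b, a, v, c, d, hu, hab.symm, hv, hcd, by grind⟩
  · exact ⟨u, b, a, v, d, c, hu, hab.symm, hv, hcd.symm, by grind⟩

lemma hasTwoPathThree_of_adj (hG : G.Connected) (h3 : ¬ HasMatchingThree G)
    (hdom : ∀ v w, ∃ z ≠ w, Gᶜ.Adj v z) {a b c d u u' : V} (hab : G.Adj a b) (hcd : G.Adj c d)
    (hn : [a, b, c, d, u, u'].Nodup) (hua : G.Adj u a) : HasTwoPathThree G := by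
  by_contra hcon
  have : Nontrivial V := ⟨a, b, hab.ne⟩
  have hadj {w : V} (hw : w ∉ [a, b, c, d]) :=
    adj_of_not_hasMatchingThree hG h3 hab hcd (hn.sublist (by simp)) hw
  have hmix {w w' : V} (hw : w ∉ [a, b, c, d]) (hw' : w' ∉ [a, b, c, d]) (hne : w ≠ w')
      (hwab : G.Adj w a ∨ G.Adj w b) : ¬ (G.Adj w' c ∨ G.Adj w' d) := fun hwcd ↦
    hcon (hasTwoPathThree_of_adj_of_adj hab hcd (by grind) hwab hwcd)
  have hu : u ∉ [a, b, c, d] := by grind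
  have hu' : u' ∉ [a, b, c, d] := by grind
  have huu' : u ≠ u' := by
    rintro rfl
    simp at hn
  have hu'ab : G.Adj u' a ∨ G.Adj u' b :=
    (hadj hu').resolve_right (hmix hu hu' huu' (Or.inl hua))
  have hcd' {w : V} (hw : w ∉ [a, b, c, d]) : ¬ (G.Adj w c ∨ G.Adj w d) := by
    by_cases hwu : w = u
    · exact hwu ▸ hmix hu' hu huu'.symm hu'ab
    · exact hmix hu hw (Ne.symm hwu) (Or.inl hua)
  exact hcon (hasTwoPathThree_of_attached hG h3 hdom hab hcd hn hua fun w hw ↦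
    ⟨(hadj hw).resolve_right (hcd' hw), not_or.1 (hcd' hw)⟩)

theorem hasMatchingThree_or_hasTwoPathThree [Fintype V] (hG : G.Connected)
    (hcard : 6 ≤ Fintype.card V) (hdom : ∀ v w, ∃ z ≠ w, Gᶜ.Adj v z) :
    HasMatchingThree G ∨ HasTwoPathThree G := by
  classical
  refine or_iff_not_imp_left.2 fun h3 ↦ ?_
  have : Nontrivial V := Fintype.one_lt_card_iff_nontrivial.1 (by omega)
  obtain ⟨a, b, c, d, hab, hcd, hn⟩ := exists_disjoint_edges_of_connected hG
    fun v ↦ let ⟨z, _, hz⟩ := hdom v v; ⟨z, hz⟩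
  obtain ⟨u, hu, u', hu', huu'⟩ : ∃ u ∉ [a, b, c, d], ∃ u' ∉ [a, b, c, d], u ≠ u' := by
    have : 1 < ({a, b, c, d}ᶜ : Finset V).card := by
      have := Finset.card_le_four (a := a) (b := b) (c := c) (d := d)
      rw [Finset.card_compl]
      omega
    obtain ⟨u, hu, u', hu', hne⟩ := Finset.one_lt_card.1 this
    exact ⟨u, by simpa using hu, u', by simpa using hu', hne⟩
  have hadj := adj_of_not_hasMatchingThree hG h3 hab hcd hn hu
  simp only [List.nodup_cons, List.mem_cons, List.not_mem_nil, List.nodup_nil, not_or, or_false,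
    not_false_eq_true, and_true] at hn hu hu'
  rcases hadj with (hua | hub) | huc | hud
  · exact hasTwoPathThree_of_adj hG h3 hdom (u' := u') hab hcd (by grind) hua
  · exact hasTwoPathThree_of_adj hG h3 hdom (u' := u') hab.symm hcd (by grind) hub
  · exact hasTwoPathThree_of_adj hG h3 hdom (u' := u') hcd hab (by grind) huc
  · exact hasTwoPathThree_of_adj hG h3 hdom (u' := u') hcd.symm hab (by grind) hud

theorem cfcColorable_card_sub_three [Fintype V] (hG : G.Connected) (hcard : 6 ≤ Fintype.card V)
    (hdom : ∀ v w, ∃ z ≠ w, Gᶜ.Adj v z) : CFCColorable G (Fintype.card V - 3) := by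
  classical
  obtain ⟨T, hTG, hT⟩ := hG.exists_isTree_le
  have hE := hT.card_edgeFinset
  refine CFCColorable.mono hTG ?_
  rcases hasMatchingThree_or_hasTwoPathThree hT.connected hcard fun v w ↦
    let ⟨z, hzw, hz⟩ := hdom v w
    ⟨z, hzw, compl_le_compl hTG hz⟩ with h | h
  · obtain ⟨e, he⟩ := h.exists_isDisjointEdgeGroups
    convert he.cfcColorable hT.connected using 1
    simp only [Fintype.card_fin, Fintype.card_unit]
    omega
  · obtain ⟨e, he⟩ := h.exists_isDisjointEdgeGroups
    convert he.cfcColorable hT.connected using 1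
    simp only [Fintype.card_fin]
    omega

end MatchingOrPaths

section Bridgeless

variable {V : Type*} {G : SimpleGraph V} {F F' : Set (Sym2 V)} {A B S : Set V} {m n : ℕ}
  {a b u v w : V}

open Classical in
/-- `u` and `v` are joined by a path of `G` with all its vertices in `A` and exactly `m` of its
edges in `F`. -/
def HasPathIn (G : SimpleGraph V) (F : Set (Sym2 V)) (A : Set V) (m : ℕ) (u v : V) : Prop :=
  ∃ p : G.Walk u v, p.IsPath ∧ (∀ x ∈ p.support, x ∈ A) ∧ p.edges.countP (· ∈ F) = m

lemma isPath_append {p : G.Walk u v} {q : G.Walk v w} (hp : p.IsPath) (hq : q.IsPath)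
    (hpq : ∀ x ∈ p.support, x ∈ q.support → x = v) : (p.append q).IsPath := by
  have hv := q.cons_tail_support.symm ▸ hq.support_nodup
  refine Walk.IsPath.mk' ?_
  rw [Walk.support_append]
  refine hp.support_nodup.append hq.support_nodup.tail fun x hxp hxq ↦ ?_
  obtain rfl := hpq x hxp (List.mem_of_mem_tail hxq)
  exact (List.nodup_cons.1 hv).1 hxq

namespace HasPathIn

lemma symm (h : HasPathIn G F A m u v) : HasPathIn G F A m v u := by
  obtain ⟨p, hp, hA, rfl⟩ := h
  exact ⟨p.reverse, hp.reverse, by simpa using hA, by simp⟩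

lemma trans (h₁ : HasPathIn G F A m u v) (h₂ : HasPathIn G F B n v w)
    (hAB : ∀ x ∈ A, x ∈ B → x = v) : HasPathIn G F (A ∪ B) (m + n) u w := by
  obtain ⟨p, hp, hpA, rfl⟩ := h₁
  obtain ⟨q, hq, hqB, rfl⟩ := h₂
  refine ⟨p.append q, isPath_append hp hq fun x hxp hxq ↦ hAB x (hpA x hxp) (hqB x hxq), ?_, ?_⟩
  · intro x hx
    exact ((Walk.mem_support_append_iff p q).1 hx).imp (hpA x) (hqB x)
  · rw [Walk.edges_append, List.countP_append]

lemma mono (h : HasPathIn G F A m u v) (hAB : A ⊆ B) : HasPathIn G F B m u v := by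
  obtain ⟨p, hp, hA, hm⟩ := h
  exact ⟨p, hp, fun x hx ↦ hAB (hA x hx), hm⟩

lemma congr (h : HasPathIn G F A m u v) (hF : F ∩ A.sym2 = F' ∩ A.sym2) :
    HasPathIn G F' A m u v := by
  obtain ⟨p, hp, hA, rfl⟩ := h
  refine ⟨p, hp, hA, List.countP_congr ?_⟩
  rintro ⟨x, y⟩ he
  have hxy : s(x, y) ∈ A.sym2 :=
    ⟨hA x (p.fst_mem_support_of_mem_edges he), hA y (p.snd_mem_support_of_mem_edges he)⟩
  simpa [hxy] using (Set.ext_iff.1 hF s(x, y)).symm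

lemma of_isPath {p : G.Walk u v} (hp : p.IsPath) (hpF : ∀ e ∈ p.edges, e ∉ F) :
    HasPathIn G F {x | x ∈ p.support} 0 u v :=
  ⟨p, hp, fun _ hx ↦ hx, by simpa [List.countP_eq_zero] using hpF⟩

lemma of_adj (h : G.Adj u v) (hF : s(u, v) ∈ F) : HasPathIn G F {u, v} 1 u v :=
  ⟨.cons h .nil, by simp [h.ne], by simp, by simp [hF]⟩

end HasPathIn

/-- Any two distinct vertices of `S` are joined inside `S` both by a path that avoids `F` and by
a path with exactly one edge in `F`. -/
def IsSwitchable (G : SimpleGraph V) (F : Set (Sym2 V)) (S : Set V) : Prop :=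
  S.Pairwise fun u v ↦ ∀ m ≤ 1, HasPathIn G F S m u v

lemma hasPathIn_one_of_ear {r : G.Walk w u} {s : G.Walk u v} {t : G.Walk v b}
    (hq : (r.append (s.append t)).IsPath) (hqF : ∀ e ∈ (r.append (s.append t)).edges, e ∉ F)
    (hqS : ∀ x ∈ (r.append (s.append t)).support, x ∈ S → x = b)
    (hwb : HasPathIn G F (insert w S) 1 w b) (huv : u ≠ v) :
    HasPathIn G F (S ∪ {x | x ∈ (r.append (s.append t)).support}) 1 u v := by
  have hst := hq.of_append_right
  have hrt : ∀ x ∈ r.support, x ∉ t.support := by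
    intro x hxr hxt
    by_cases hxu : x = u
    · exact hst.ne_of_mem_support_of_append huv s.start_mem_support (hxu ▸ hxt) rfl
    · exact hq.ne_of_mem_support_of_append hxu hxr
        (Walk.mem_support_append_iff _ _ |>.2 (.inr hxt)) rfl
  simp only [Walk.mem_support_append_iff, Walk.edges_append, List.mem_append] at hqF hqS ⊢
  have hr := HasPathIn.of_isPath (F := F) hq.of_append_left fun e he ↦ hqF e (.inl he)
  have ht := HasPathIn.of_isPath (F := F) hst.of_append_right fun e he ↦ hqF e (.inr (.inr he))
  refine ((hr.symm.trans hwb ?_).trans ht.symm ?_).mono ?_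
  · rintro x hxr (rfl | hxS)
    · rfl
    · exact absurd (hqS x (.inl hxr) hxS ▸ t.end_mem_support) (hrt x hxr)
  · rintro x (hxr | rfl | hxS) hxt
    · exact absurd hxt (hrt x hxr)
    · exact absurd hxt (hrt x r.start_mem_support)
    · exact hqS x (.inr (.inr hxt)) hxS
  · rintro x ((hx | rfl | hx) | hx)
    · exact .inr (.inl hx)
    · exact .inr (.inl r.start_mem_support)
    · exact .inl hx
    · exact .inr (.inr (.inr hx))

lemma pairwise_hasPathIn_of_ear {q : G.Walk w b} (hq : q.IsPath) (hqF : ∀ e ∈ q.edges, e ∉ F)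
    (hqS : ∀ x ∈ q.support, x ∈ S → x = b) (hwb : HasPathIn G F (insert w S) 1 w b) :
    {x | x ∈ q.support}.Pairwise
      fun u v ↦ ∀ m ≤ 1, HasPathIn G F (S ∪ {x | x ∈ q.support}) m u v := by
  have key {u v : V} (r : G.Walk w u) (t : G.Walk u b) (hrt : q = r.append t)
      (hv : v ∈ t.support) (huv : u ≠ v) :
      ∀ m ≤ 1, HasPathIn G F (S ∪ {x | x ∈ q.support}) m u v := by
    obtain ⟨s, t, rfl⟩ := Walk.mem_support_iff_exists_append.1 hv
    subst hrt
    intro m hm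
    obtain rfl | rfl := Nat.le_one_iff_eq_zero_or_eq_one.1 hm
    · refine (HasPathIn.of_isPath hq.of_append_right.of_append_left fun e he ↦
        hqF e (by simp [he])).mono fun x hx ↦ .inr ?_
      simp only [Set.mem_ofPred_eq, Walk.mem_support_append_iff] at hx ⊢
      exact .inr (.inl hx)
    · exact hasPathIn_one_of_ear hq hqF hqS hwb huv
  intro u hu v hv huv
  obtain ⟨r, t, hrt⟩ := Walk.mem_support_iff_exists_append.1 hu
  obtain hv | hv := (Walk.mem_support_append_iff r t).1 (hrt ▸ hv)
  · obtain ⟨r₁, r₂, rfl⟩ := Walk.mem_support_iff_exists_append.1 hv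
    refine fun m hm ↦ (key r₁ (r₂.append t) (by rw [hrt, Walk.append_assoc]) ?_ huv.symm m hm).symm
    exact (Walk.mem_support_append_iff _ _).2 (.inl r₂.end_mem_support)
  · exact key r t hrt hv huv

/-- Attaching an `F`-free ear `q` to `S`: two vertices of the ear are joined along the ear or the
other way round through `S`, and the path through `S` is assumed to meet `F` once. -/
lemma IsSwitchable.union_ear (hS : IsSwitchable G F S) {q : G.Walk w b} (hb : b ∈ S)
    (hq : q.IsPath) (hqF : ∀ e ∈ q.edges, e ∉ F) (hqS : ∀ x ∈ q.support, x ∈ S → x = b)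
    (hwb : HasPathIn G F (insert w S) 1 w b) : IsSwitchable G F (S ∪ {x | x ∈ q.support}) := by
  have hear := pairwise_hasPathIn_of_ear hq hqF hqS hwb
  have hcross {u v : V} (hu : u ∈ S) (hv : v ∈ q.support) (huv : u ≠ v) :
      ∀ m ≤ 1, HasPathIn G F (S ∪ {x | x ∈ q.support}) m u v := by
    by_cases hub : u = b
    · exact hear (hub ▸ q.end_mem_support) hv huv
    · intro m hm
      obtain ⟨r, t, rfl⟩ := Walk.mem_support_iff_exists_append.1 hv
      simp only [Walk.mem_support_append_iff, Walk.edges_append, List.mem_append] at hqF hqS ⊢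
      have ht := HasPathIn.of_isPath (F := F) hq.of_append_right fun e he ↦ hqF e (.inr he)
      refine ((hS hu hb hub m hm).trans ht.symm fun x hx hxt ↦ hqS x (.inr hxt) hx).mono ?_
      exact Set.union_subset_union_right S fun x hx ↦ .inr hx
  refine Set.pairwise_union.2 ⟨?_, hear, fun u hu v hv huv ↦ ?_⟩
  · exact fun u hu v hv huv m hm ↦ (hS hu hv huv m hm).mono Set.subset_union_left
  · exact ⟨hcross hu hv huv, fun m hm ↦ (hcross hu hv huv m hm).symm⟩

lemma exists_ear_s17 (hb : ¬ G.IsBridge s(w, a)) (ha : a ∈ S) :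
    ∃ b ∈ S, ∃ q : G.Walk w b, q.IsPath ∧ s(w, a) ∉ q.edges ∧ ∀ x ∈ q.support, x ∈ S → x = b := by
  classical
  simp only [isBridge_iff_forall_walk_mem_edges, not_forall] at hb
  obtain ⟨p, hp⟩ := hb
  obtain ⟨b, hbS, hbp, hfirst⟩ := p.bypass.exists_mem_support_forall_mem_support_imp_eq
    {x ∈ p.bypass.support.toFinset | x ∈ S} ⟨a, by simp [ha]⟩
  have hsub := p.bypass.support_takeUntil_subset_support hbp
  refine ⟨b, (Finset.mem_filter.1 hbS).2, p.bypass.takeUntil b hbp, p.bypass_isPath.takeUntil hbp,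
    fun h ↦ hp ?_, fun x hx hxS ↦ hfirst x ?_ hx⟩
  · exact p.edges_bypass_subset_edges (p.bypass.edges_takeUntil_subset_edges hbp h)
  · exact Finset.mem_filter.2 ⟨List.mem_toFinset.2 (hsub hx), hxS⟩

lemma IsSwitchable.exists_ssuperset (hS : IsSwitchable G F S) (hFS : F ⊆ S.sym2)
    (hb : ¬ G.IsBridge s(w, a)) (ha : a ∈ S) (hw : w ∉ S) (hwa : G.Adj w a) :
    ∃ F' S', S ⊂ S' ∧ F' ⊆ S'.sym2 ∧ IsSwitchable G F' S' := by
  obtain ⟨b, hbS, q, hq, hwaq, hqS⟩ := exists_ear_s17 hb ha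
  have hSq : S ⊂ S ∪ {x | x ∈ q.support} :=
    Set.ssubset_iff_of_subset Set.subset_union_left |>.2 ⟨w, .inr q.start_mem_support, hw⟩
  have hqF : ∀ e ∈ q.edges, e ∉ F := by
    rintro ⟨x, y⟩ he heF
    obtain ⟨hx, hy⟩ := hFS heF
    refine (q.adj_of_mem_edges he).ne ?_
    rw [hqS x (q.fst_mem_support_of_mem_edges he) hx, hqS y (q.snd_mem_support_of_mem_edges he) hy]
  have hwaS : s(w, a) ∉ S.sym2 := fun h ↦ hw h.1
  have hFSq : F ⊆ (S ∪ {x | x ∈ q.support}).sym2 := fun e he ↦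
    Set.mem_sym2_iff_subset.2 ((Set.mem_sym2_iff_subset.1 (hFS he)).trans hSq.subset)
  by_cases hab : a = b
  · subst hab
    have hcongr : F ∩ S.sym2 = insert s(w, a) F ∩ S.sym2 :=
      (Set.insert_inter_of_notMem hwaS).symm
    refine ⟨insert s(w, a) F, _, hSq, ?_, IsSwitchable.union_ear (q := q) ?_ ha hq ?_ hqS ?_⟩
    · exact Set.insert_subset ⟨.inr q.start_mem_support, .inl ha⟩ hFSq
    · exact fun u hu v hv huv m hm ↦ (hS hu hv huv m hm).congr hcongr
    · rintro e he (rfl | heF)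
      exacts [hwaq he, hqF e he heF]
    · exact (HasPathIn.of_adj hwa (Set.mem_insert _ _)).mono
        (Set.insert_subset_insert (Set.singleton_subset_iff.2 ha))
  · refine ⟨F, _, hSq, hFSq, hS.union_ear hbS hq hqF hqS ?_⟩
    have hwaF : HasPathIn G F {w, a} 0 w a :=
      ⟨.cons hwa .nil, by simp [hwa.ne], by simp, by simpa using fun h ↦ hwaS (hFS h)⟩
    refine (hwaF.trans (hS ha hbS hab 1 le_rfl) ?_).mono ?_
    · rintro x (rfl | rfl) hx
      exacts [absurd hx hw, rfl]
    · rintro x ((rfl | rfl) | hx)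
      exacts [.inl rfl, .inr ha, .inr hx]

theorem exists_isSwitchable_univ [Finite V] (hG : G.Connected) (hb : ∀ e, ¬ G.IsBridge e) :
    ∃ F, IsSwitchable G F Set.univ := by
  obtain ⟨v⟩ := hG.nonempty
  obtain ⟨S, ⟨⟨a, ha⟩, F, hFS, hS⟩, hmax⟩ := Set.Finite.exists_maximal
    (s := {S : Set V | S.Nonempty ∧ ∃ F ⊆ S.sym2, IsSwitchable G F S}) (Set.toFinite _)
    ⟨{v}, ⟨v, rfl⟩, ∅, Set.empty_subset _, Set.pairwise_singleton _ _⟩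
  suffices S = Set.univ from ⟨F, this ▸ hS⟩
  by_contra hne
  obtain ⟨w, hw⟩ := (Set.ne_univ_iff_exists_notMem S).1 hne
  obtain ⟨x, hx, y, hy, hxy⟩ := exists_adj_of_connected hG ha hw
  obtain ⟨F', S', hSS', hF', hS'⟩ := hS.exists_ssuperset hFS (hb s(y, x)) hx hy hxy.symm
  exact hSS'.not_subset (hmax ⟨⟨a, hSS'.subset ha⟩, F', hF', hS'⟩ hSS'.subset)

open Classical in
lemma IsSwitchable.cfcColorable_two (hF : IsSwitchable G F Set.univ) : CFCColorable G 2 := by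
  refine ⟨fun e ↦ if e ∈ F then 1 else 0, fun e _ ↦ by dsimp only; split_ifs <;> simp,
    fun u v huv ↦ ?_⟩
  obtain ⟨p, hp, -, hpF⟩ := hF (Set.mem_univ u) (Set.mem_univ v) huv 1 le_rfl
  rw [List.countP_eq_length_filter, List.length_eq_one_iff] at hpF
  obtain ⟨e, he⟩ := hpF
  have hmem (e' : Sym2 V) : e' ∈ p.edges ∧ e' ∈ F ↔ e' = e := by
    rw [← List.mem_singleton, ← he, List.mem_filter, decide_eq_true_iff]
  obtain ⟨hep, heF⟩ := (hmem e).2 rfl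
  refine ⟨⟨p, hp⟩, e, hep, fun e' he' heq ↦ (hmem e').1 ⟨he', ?_⟩⟩
  by_contra heF'
  simp [heF, heF'] at heq

theorem cfcColorable_two [Finite V] (hG : G.Connected) (hb : ∀ e, ¬ G.IsBridge e) :
    CFCColorable G 2 := by
  obtain ⟨F, hF⟩ := exists_isSwitchable_univ hG hb
  exact hF.cfcColorable_two

end Bridgeless

section MaxDegreeTwo

variable {V : Type*} {G : SimpleGraph V} {a b u v w : V}

lemma eq_or_eq_of_degree_le_two [Fintype (G.neighborSet v)] (hdeg : G.degree v ≤ 2)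
    (ha : G.Adj v a) (hb : G.Adj v b) (hab : a ≠ b) (hw : G.Adj v w) : w = a ∨ w = b := by
  classical
  have hsub : {a, b} ⊆ G.neighborFinset v := by
    simp [Finset.insert_subset_iff, ha, hb]
  have heq := Finset.eq_of_subset_of_card_le hsub (by simpa [Finset.card_pair hab] using hdeg)
  simpa [← heq] using (G.mem_neighborFinset v w).2 hw

lemma eq_getVert_of_adj [G.LocallyFinite] (hdeg : ∀ v, G.degree v ≤ 2) {p : G.Walk u v}
    (hp : p.IsPath) {i : ℕ} (hi0 : i ≠ 0) (hi : i < p.length) (hw : G.Adj (p.getVert i) w) :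
    w = p.getVert (i - 1) ∨ w = p.getVert (i + 1) := by
  obtain ⟨i, rfl⟩ := Nat.exists_eq_succ_of_ne_zero hi0
  refine eq_or_eq_of_degree_le_two (hdeg _) (p.adj_getVert_succ (by omega)).symm
    (p.adj_getVert_succ hi) (fun h ↦ ?_) hw
  have := hp.getVert_injOn (Set.mem_ofPred.2 (by omega)) (Set.mem_ofPred.2 (by omega)) h
  omega

lemma eq_succ_or_ends_of_adj_getVert [G.LocallyFinite] (hdeg : ∀ v, G.degree v ≤ 2)
    {p : G.Walk u v} (hp : p.IsPath) {i j : ℕ} (hij : i < j) (hj : j ≤ p.length)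
    (hadj : G.Adj (p.getVert i) (p.getVert j)) : j = i + 1 ∨ i = 0 ∧ j = p.length := by
  have hinj {k l : ℕ} (hk : k ≤ p.length) (hl : l ≤ p.length) (h : p.getVert k = p.getVert l) :
      k = l := hp.getVert_injOn hk hl h
  by_cases hi0 : i = 0
  · by_cases hjl : j = p.length
    · exact .inr ⟨hi0, hjl⟩
    · obtain h | h := eq_getVert_of_adj hdeg hp (by omega) (by omega) hadj.symm
      all_goals have := hinj (by omega) (by omega) h; omega
  · obtain h | h := eq_getVert_of_adj hdeg hp hi0 (by omega) hadj
    all_goals have := hinj (by omega) (by omega) h; omega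

lemma mem_support_of_adj_of_maximal {p : G.Walk u v} (hp : p.IsPath)
    (hmax : ∀ (w : V) (q : G.Walk w v), q.IsPath → q.length ≤ p.length) (hw : G.Adj w u) :
    w ∈ p.support := by
  by_contra hwp
  have := hmax w (.cons hw p) (hp.cons hwp)
  simp only [Walk.length_cons] at this
  omega

lemma isHamiltonian_of_maximal [DecidableEq V] [G.LocallyFinite] (hG : G.Connected)
    (hdeg : ∀ v, G.degree v ≤ 2) {p : G.Walk u v} (hp : p.IsPath)
    (hmax : ∀ (u' v' : V) (q : G.Walk u' v'), q.IsPath → q.length ≤ p.length) :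
    p.IsHamiltonian := by
  refine hp.isHamiltonian_of_mem fun w ↦ ?_
  by_contra hw
  obtain ⟨x, hx, y, hy, hxy⟩ := exists_adj_of_connected hG (S := {x | x ∈ p.support})
    p.start_mem_support hw
  refine hy ?_
  obtain ⟨i, rfl, hi⟩ := Walk.mem_support_iff_exists_getVert.1 hx
  by_cases hi0 : i = 0
  · subst hi0
    exact mem_support_of_adj_of_maximal hp (fun w ↦ hmax w v) (p.getVert_zero ▸ hxy.symm)
  by_cases hil : i = p.length
  · subst hil
    have := mem_support_of_adj_of_maximal hp.reverse (fun w q hq ↦ by simpa using hmax w u q hq)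
      (p.getVert_length ▸ hxy.symm)
    simpa using this
  obtain rfl | rfl := eq_getVert_of_adj hdeg hp hi0 (by omega) hxy
  all_goals exact p.getVert_mem_support _

lemma nonempty_iso_pathGraph_of_isHamiltonian [Fintype V] [DecidableEq V] [G.LocallyFinite]
    (hdeg : ∀ v, G.degree v ≤ 2) {p : G.Walk u v} (hp : p.IsHamiltonian)
    (hends : G.Adj u v → p.length = 1) : Nonempty (G ≃g pathGraph (Fintype.card V)) := by
  rw [← hp.length_support]
  have hadj {i j : ℕ} (hij : i < j) (hj : j ≤ p.length) :
      G.Adj (p.getVert i) (p.getVert j) ↔ i + 1 = j := by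
    refine ⟨fun h ↦ ?_, fun h ↦ h ▸ p.adj_getVert_succ (by omega)⟩
    obtain rfl | ⟨rfl, rfl⟩ := eq_succ_or_ends_of_adj_getVert hdeg hp.isPath hij hj h
    · rfl
    · rw [Walk.getVert_zero, Walk.getVert_length] at h
      exact (hends h).symm
  have hle (i : Fin p.support.length) : (i : ℕ) ≤ p.length := by
    simpa [Nat.lt_succ_iff] using i.2
  refine ⟨RelIso.symm ⟨hp.getVertEquiv, fun {i j} ↦ ?_⟩⟩
  simp only [Walk.IsHamiltonian.getVertEquiv_apply, Function.comp_apply, pathGraph_adj]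
  obtain hij | hij | hij := lt_trichotomy (i : ℕ) j
  · rw [hadj hij (hle j)]
    omega
  · simp [hij]
  · rw [G.adj_comm, hadj hij (hle i)]
    omega

theorem nonempty_iso_pathGraph_or_isHamiltonian [Fintype V] [DecidableEq V] [G.LocallyFinite]
    (hG : G.Connected) (hdeg : ∀ v, G.degree v ≤ 2) :
    Nonempty (G ≃g pathGraph (Fintype.card V)) ∨ G.IsHamiltonian := by
  have := hG.nonempty
  obtain ⟨u, v, p, hp, hmax⟩ := Walk.exists_isPath_forall_isPath_length_le_length G
  have hham := isHamiltonian_of_maximal hG hdeg hp fun _ _ ↦ hmax _ _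
  by_cases hends : G.Adj u v → p.length = 1
  · exact .inl (nonempty_iso_pathGraph_of_isHamiltonian hdeg hham hends)
  · obtain ⟨huv, hlen⟩ := Classical.not_imp.1 hends
    refine .inr fun _ ↦ ⟨v, .cons huv.symm p,
      (Walk.cons_isCycle_iff _ _).2 ⟨hp, fun he ↦ hlen ?_⟩, ?_⟩
    · exact hp.length_eq_one_of_mem_edges (Sym2.eq_swap ▸ he)
    · simpa [Walk.IsHamiltonian] using hham

end MaxDegreeTwo

section PathFive

lemma isTree_pathGraph (n : ℕ) : (pathGraph (n + 1)).IsTree := by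
  refine ⟨pathGraph_connected n, isAcyclic_iff_forall_adj_isBridge.2 fun i j hij ↦ ?_⟩
  wlog hlt : i < j generalizing i j
  · exact Sym2.eq_swap ▸ this _ _ hij.symm (lt_of_le_of_ne (not_lt.1 hlt) hij.ne')
  rw [isBridge_iff, reachable_iff_reflTransGen]
  have hle {k : Fin (n + 1)}
      (hk : Relation.ReflTransGen ((pathGraph (n + 1)).deleteEdges {s(i, j)}).Adj i k) : k ≤ i := by
    induction hk with
    | refl => exact le_rfl
    | @tail k l _ hkl hki =>
      rw [deleteEdges_adj, pathGraph_adj] at hkl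
      rw [pathGraph_adj] at hij
      by_contra! hil
      refine hkl.2 ?_
      rw [show k = i by omega, show l = j by omega]
      rfl
  exact fun h ↦ (hle h).not_gt hlt

lemma isDisjointEdgeGroups_pathGraph_five :
    IsDisjointEdgeGroups (pathGraph 5)
      (![fun _ ↦ s(0, 1), fun _ ↦ s(2, 3)] : Fin 2 → Unit → Sym2 (Fin 5)) where
  mem_edgeSet i _ := by fin_cases i <;> simp [pathGraph_adj]
  injective _ := Function.injective_of_subsingleton _
  eq_of_mem {i j _ _ x} := by
    fin_cases i <;> fin_cases j <;> fin_cases x <;> simp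

lemma cfcColorable_pathGraph_five : CFCColorable (pathGraph 5) 3 := by
  classical
  have hT : (pathGraph 5).IsTree := isTree_pathGraph 4
  have hE := hT.card_edgeFinset
  convert isDisjointEdgeGroups_pathGraph_five.cfcColorable (pathGraph_connected 4) using 1
  simp only [Fintype.card_fin, Fintype.card_unit] at hE ⊢
  omega

lemma three_le_of_cfcColorable_pathGraph_five {k : ℕ} (h : CFCColorable (pathGraph 5) k) :
    3 ≤ k := by
  obtain ⟨c, hk, hc⟩ := h
  have h01 : (pathGraph 5).Adj 0 1 := by simp [pathGraph_adj]
  have h12 : (pathGraph 5).Adj 1 2 := by simp [pathGraph_adj]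
  have h23 : (pathGraph 5).Adj 2 3 := by simp [pathGraph_adj]
  have h34 : (pathGraph 5).Adj 3 4 := by simp [pathGraph_adj]
  have hpath {u v : Fin 5} (p : (pathGraph 5).Walk u v) (huv : u ≠ v) (hp : p.IsPath) :
      ∃ e ∈ p.edges, ∀ e' ∈ p.edges, c e' = c e → e' = e := by
    obtain ⟨q, h⟩ := hc u v huv
    rwa [((isTree_pathGraph 4).isAcyclic.subsingleton_path u v).elim q ⟨p, hp⟩] at h
  have hc02 : c s(0, 1) ≠ c s(1, 2) := by
    simpa [eq_comm] using hpath (.cons h01 (.cons h12 .nil)) (by decide) (by simp [Walk.isPath_def])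
  have hc13 : c s(1, 2) ≠ c s(2, 3) := by
    simpa [eq_comm] using hpath (.cons h12 (.cons h23 .nil)) (by decide) (by simp [Walk.isPath_def])
  have hc24 : c s(2, 3) ≠ c s(3, 4) := by
    simpa [eq_comm] using hpath (.cons h23 (.cons h34 .nil)) (by decide) (by simp [Walk.isPath_def])
  obtain ⟨e, he, huniq⟩ := hpath (.cons h01 (.cons h12 (.cons h23 (.cons h34 .nil)))) (by decide)
    (by simp [Walk.isPath_def])
  simp only [Walk.edges_cons, Walk.edges_nil, List.mem_cons, List.not_mem_nil, or_false] at he huniq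
  by_contra! hlt
  have hk01 := hk s(0, 1) h01
  have hk12 := hk s(1, 2) h12
  have hk23 := hk s(2, 3) h23
  have hk34 := hk s(3, 4) h34
  have heven : c s(0, 1) = c s(2, 3) := by omega
  have hodd : c s(1, 2) = c s(3, 4) := by omega
  obtain rfl | rfl | rfl | rfl := he
  · exact absurd (huniq s(2, 3) (by simp) heven.symm) (by decide)
  · exact absurd (huniq s(3, 4) (by simp) hodd.symm) (by decide)
  · exact absurd (huniq s(0, 1) (by simp) heven) (by decide)
  · exact absurd (huniq s(1, 2) (by simp) hodd) (by decide)

lemma cfcNum_pathGraph_five : cfcNum (pathGraph 5) = 3 :=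
  le_antisymm cfcColorable_pathGraph_five.cfcNum_le
    (three_le_of_cfcColorable_pathGraph_five cfcColorable_pathGraph_five.cfcColorable_cfcNum)

end PathFive

section Complement

variable {V : Type*} {G : SimpleGraph V}

lemma exists_ne_adj_of_forall_not_isBridge [Nontrivial V] (hG : G.Connected)
    (hb : ∀ e, ¬ G.IsBridge e) (v w : V) : ∃ z ≠ w, G.Adj v z := by
  obtain rfl | hvw := eq_or_ne v w
  · obtain ⟨z, hz⟩ := hG.preconnected.exists_adj_of_nontrivial v
    exact ⟨z, hz.ne', hz⟩
  · have h := hb s(v, w)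
    rw [isBridge_iff, not_not] at h
    obtain ⟨p⟩ := h
    obtain ⟨hz, hne⟩ := deleteEdges_adj.1 (p.adj_snd (Walk.not_nil_of_ne hvw))
    exact ⟨p.snd, fun h ↦ hne (by simp [h]), hz⟩

lemma degree_le_card_sub_three [Fintype V] [DecidableRel G.Adj] {v : V}
    (hdom : ∀ w, ∃ z ≠ w, Gᶜ.Adj v z) : G.degree v ≤ Fintype.card V - 3 := by
  classical
  obtain ⟨x, -, hx⟩ := hdom v
  obtain ⟨y, hyx, hy⟩ := hdom x
  have hcompl : 1 < Gᶜ.degree v :=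
    Finset.one_lt_card.2 ⟨x, by simpa using hx, y, by simpa using hy, hyx.symm⟩
  rw [degree_compl] at hcompl
  omega

lemma nonempty_iso_pathGraph_five_or_cfcColorable [Fintype V] (hG : G.Connected)
    (hcard : 5 ≤ Fintype.card V) (hdom : ∀ v w, ∃ z ≠ w, Gᶜ.Adj v z) :
    Nonempty (G ≃g pathGraph 5) ∨ CFCColorable G (Fintype.card V - 3) := by
  classical
  obtain h5 | h6 := hcard.eq_or_lt
  · have hdeg (v : V) : G.degree v ≤ 2 := by
      simpa [← h5] using degree_le_card_sub_three (hdom v)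
    rw [← h5]
    refine (h5 ▸ nonempty_iso_pathGraph_or_isHamiltonian hG hdeg).imp_right fun hham ↦ ?_
    exact cfcColorable_two hG fun e he ↦ he.not_isHamiltonian hham
  · exact .inr (cfcColorable_card_sub_three hG h6 hdom)

end Complement

theorem nordhausGaddum_twoEdgeConnected_general {V : Type*} [Fintype V] (G : SimpleGraph V)
    (h5 : 5 ≤ Fintype.card V) (hG : G.Connected) (hGb : ∀ e : Sym2 V, ¬ G.IsBridge e)
    (hGc : Gᶜ.Connected) :
    (4 ≤ cfcNum G + cfcNum Gᶜ ∧ cfcNum G + cfcNum Gᶜ ≤ Fintype.card V) ∧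
    (4 ≤ cfcNum G * cfcNum Gᶜ ∧ cfcNum G * cfcNum Gᶜ ≤ 2 * (Fintype.card V - 2)) ∧
    (cfcNum G + cfcNum Gᶜ = Fintype.card V ↔ Nonempty (Gᶜ ≃g pathGraph 5)) ∧
    (cfcNum G * cfcNum Gᶜ = 2 * (Fintype.card V - 2) ↔ Nonempty (Gᶜ ≃g pathGraph 5)) := by
  have : Nontrivial V := Fintype.one_lt_card_iff_nontrivial.1 (by omega)
  obtain ⟨u⟩ := hG.nonempty
  obtain ⟨v, huv⟩ := hG.preconnected.exists_adj_of_nontrivial u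
  obtain ⟨w, huw⟩ := hGc.preconnected.exists_adj_of_nontrivial u
  have hcol := cfcColorable_two hG hGb
  have hG2 : cfcNum G = 2 :=
    hcol.cfcNum_le.antisymm (hcol.two_le_cfcNum huw.ne ((compl_adj _ _ _).1 huw).2)
  have hiso : Nonempty (Gᶜ ≃g pathGraph 5) → Fintype.card V = 5 ∧ cfcNum Gᶜ = 3 := fun ⟨f⟩ ↦
    ⟨Fintype.card_congr f.toEquiv, (cfcNum_congr f).trans cfcNum_pathGraph_five⟩
  have hdom := exists_ne_adj_of_forall_not_isBridge hG hGb
  obtain hP | hcolc := nonempty_iso_pathGraph_five_or_cfcColorable hGc h5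
    (by rwa [compl_compl])
  · simp [hP, hG2, hiso hP]
  · have hle := hcolc.cfcNum_le
    have hge := hcolc.two_le_cfcNum huv.ne fun h ↦ ((compl_adj _ _ _).1 h).2 huv
    have hP : ¬ Nonempty (Gᶜ ≃g pathGraph 5) := fun h ↦ by
      have := hiso h
      omega
    simp only [hP, hG2, iff_false]
    omega

/-- Nordhaus–Gaddum bounds when G is 2-edge-connected (n ≥ 5) and Ḡ is connected
with a cut-edge; equality in the upper bounds holds iff Ḡ ≅ P_5. -/
theorem nordhausGaddum_twoEdgeConnected {V : Type*} [Fintype V] (G : SimpleGraph V)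
    (n : ℕ) (hn : Fintype.card V = n) (h5 : 5 ≤ n)
    (hG : G.Connected) (hGb : ∀ e : Sym2 V, ¬ G.IsBridge e)
    (hGc : Gᶜ.Connected) (hGcb : ∃ e : Sym2 V, Gᶜ.IsBridge e) :
    (4 ≤ cfcNum G + cfcNum Gᶜ ∧ cfcNum G + cfcNum Gᶜ ≤ n) ∧
    (4 ≤ cfcNum G * cfcNum Gᶜ ∧ cfcNum G * cfcNum Gᶜ ≤ 2 * (n - 2)) ∧
    (cfcNum G + cfcNum Gᶜ = n ↔ Nonempty (Gᶜ ≃g SimpleGraph.pathGraph 5)) ∧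
    (cfcNum G * cfcNum Gᶜ = 2 * (n - 2) ↔ Nonempty (Gᶜ ≃g SimpleGraph.pathGraph 5)) := by
  subst hn
  exact nordhausGaddum_twoEdgeConnected_general G h5 hG hGb hGc
end

section
/- Let G be a simple graph on n ≥ 4 vertices such that both G and its complement Ḡ are connected and both have edge-connectivity 1 (i.e., each has a cut-edge). Then 4 ≤ cfc(G) + cfc(Ḡ) ≤ n and 4 ≤ cfc(G) · cfc(Ḡ) ≤ 2(n − 2). Moreover, cfc(G) + cfc(Ḡ) = n or cfc(G) · cfc(Ḡ) = 2(n − 2) holds if and only if one of G and Ḡ is a tree with maximum degree n − 2. -/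
open SimpleGraph

/-!
If `xy` is a bridge of `G`, then `Gᶜ` contains all but one of the edges between the two sides of the
cut, and it is bridgeless once both sides have at least three vertices. So one side has at most two,
which gives `G` a pendant vertex; likewise `Gᶜ` has a pendant vertex `a`, with neighbour `b` say,
and `a` is then adjacent in `G` to everything except `b`.

Let `m` be the number of bridges of `G` at `a`. The path between the far ends of two of them is
unique and has length two, so these bridges need distinct colors. Conversely `max 2 m` colors
suffice, hence `cfc(G) = max 2 m`. Moreover `m ≤ deg a = n - 2`, with equality exactly for trees.
At least one of `m` and the corresponding number for `Gᶜ` is at most two: all but one of the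
bridges at `a` end in a leaf of `G`, and two leaves of `G` at `a` together with two leaves of `Gᶜ`
at a common vertex are impossible.
-/

section Bridges

variable {V : Type*} {G : SimpleGraph V} {a b t t' u v w x y z : V}

theorem not_isBridge_of_triangle (huw : G.Adj u w) (hwv : G.Adj w v) : ¬ G.IsBridge s(u, v) := by
  intro h
  have := isBridge_iff_forall_walk_mem_edges.1 h (.cons huw (.cons hwv .nil))
  grind [huw.ne, hwv.ne, Walk.edges_cons, Walk.edges_nil]

theorem not_isBridge_of_square (hux : G.Adj u x) (hxy : G.Adj x y) (hyv : G.Adj y v)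
    (hxv : x ≠ v) (hyu : y ≠ u) : ¬ G.IsBridge s(u, v) := by
  intro h
  have := isBridge_iff_forall_walk_mem_edges.1 h (.cons hux (.cons hxy (.cons hyv .nil)))
  grind [hux.ne, hxy.ne, hyv.ne, Walk.edges_cons, Walk.edges_nil]

/-- The bridges of `G` that are incident with `a`; their number determines `cfcNum G` when `a` is
adjacent to all but one of the other vertices. Since `SimpleGraph.IsBridge` also holds for
non-edges joining distinct components, being an edge is required separately, as part of membership
in `G.incidenceSet a`. -/
def bridgesAt (G : SimpleGraph V) (a : V) : Set (Sym2 V) :=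
  {e ∈ G.incidenceSet a | G.IsBridge e}

theorem mk_mem_bridgesAt : s(a, u) ∈ bridgesAt G a ↔ G.Adj a u ∧ G.IsBridge s(a, u) := by
  simp [bridgesAt]

theorem exists_eq_of_mem_bridgesAt {e : Sym2 V} (he : e ∈ bridgesAt G a) :
    ∃ u, G.Adj a u ∧ G.IsBridge s(a, u) ∧ e = s(a, u) := by
  obtain ⟨u, rfl⟩ := he.1.2
  exact ⟨u, he.1.1, he.2, rfl⟩

theorem mk_notMem_bridgesAt (hu : u ≠ a) (hv : v ≠ a) : s(u, v) ∉ bridgesAt G a := by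
  intro h
  have := h.1.2
  simp only [Sym2.mem_iff] at this
  grind

theorem notMem_bridgesAt_of_adj (huz : G.Adj u z) (hza : G.Adj z a) : s(a, u) ∉ bridgesAt G a :=
  fun h ↦ not_isBridge_of_triangle hza.symm huz.symm (mk_mem_bridgesAt.1 h).2

theorem notMem_bridgesAt_of_square (hbt : G.Adj b t) (hbt' : G.Adj b t')
    (hat' : G.Adj a t') (htt' : t ≠ t') (hab : a ≠ b) : s(a, t) ∉ bridgesAt G a :=
  fun h ↦ not_isBridge_of_square hat' hbt'.symm hbt htt'.symm hab.symm (mk_mem_bridgesAt.1 h).2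

theorem ncard_bridgesAt_le_degree [Finite V] [Fintype (G.neighborSet a)] :
    (bridgesAt G a).ncard ≤ G.degree a := by
  classical
  rw [← card_incidenceSet_eq_degree, ← Nat.card_eq_fintype_card]
  exact Set.ncard_le_ncard (Set.sep_subset ..)

end Bridges

section PendantVertices

variable {V : Type*} {G : SimpleGraph V} {a b u v w x y : V}

/-- `x` is a pendant vertex (a leaf) of `G`, and `y` is its only neighbour. For `Gᶜ` in place of
`G` this says that `y` is the only other vertex to which `x` is not adjacent in `G`. -/
def IsPendant (G : SimpleGraph V) (x y : V) : Prop :=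
  ∀ z, G.Adj x z ↔ z = y

namespace IsPendant

theorem adj (h : IsPendant G x y) : G.Adj x y :=
  (h y).2 rfl

theorem isBridge (h : IsPendant G x y) : G.IsBridge s(x, y) := by
  rw [isBridge_iff_forall_walk_mem_edges]
  intro p
  match p with
  | .nil => exact absurd h.adj G.irrefl
  | .cons hxz q => simp [(h _).1 hxz]

theorem adj_iff_of_compl (h : IsPendant Gᶜ x y) : G.Adj x u ↔ u ≠ x ∧ u ≠ y := by
  have := h u
  have := h.adj
  grind [compl_adj, SimpleGraph.irrefl]

theorem adj_left_of_adj_right (hab : IsPendant Gᶜ a b) (hbu : G.Adj b u) : G.Adj a u :=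
  hab.adj_iff_of_compl.2 ⟨fun h ↦ hab.adj.2 (h ▸ hbu.symm), hbu.ne'⟩

theorem degree [Fintype (G.neighborSet x)] (h : IsPendant G x y) : G.degree x = 1 := by
  rw [degree_eq_one_iff_existsUnique_adj]
  exact ⟨y, h.adj, fun z hz ↦ (h z).1 hz⟩

theorem degree_of_compl [Fintype V] [DecidableRel G.Adj] (h : IsPendant Gᶜ x y) :
    G.degree x = Fintype.card V - 2 := by
  classical
  have := G.degree_compl x
  have := G.degree_lt_card_verts x
  have := h.degree
  lia

theorem not_isPendant_compl [Fintype V] (h4 : 4 ≤ Fintype.card V) (h : IsPendant G x y) :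
    ¬ IsPendant Gᶜ x w := by
  classical
  intro h'
  have := h.degree
  have := h'.degree_of_compl
  lia

end IsPendant

theorem exists_adj_ne_of_not_isPendant (h : ¬ IsPendant G x y) (hxy : G.Adj x y) :
    ∃ z, z ≠ y ∧ G.Adj x z := by
  contrapose! h
  exact fun z ↦ ⟨fun hz ↦ of_not_not (h z · hz), fun hz ↦ hz ▸ hxy⟩

/-- `X` is a side of an edge cut of `G` that contains at most the edge `xy`, where `x ∈ X` and
`y ∉ X`: the cut defined by the bridge `xy`. -/
structure IsSingleEdgeCut (G : SimpleGraph V) (X : Set V) (x y : V) : Prop where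
  left_mem : x ∈ X
  right_notMem : y ∉ X
  eq_of_adj : ∀ ⦃u⦄, u ∈ X → ∀ ⦃v⦄, v ∉ X → G.Adj u v → u = x ∧ v = y

theorem exists_isSingleEdgeCut_of_isBridge (h : G.IsBridge s(x, y)) :
    ∃ X : Set V, IsSingleEdgeCut G X x y := by
  rw [isBridge_iff] at h
  refine ⟨{v | (G.deleteEdges {s(x, y)}).Reachable x v}, .rfl, h, fun u hu v hv huv ↦ ?_⟩
  have huv_eq : s(u, v) = s(x, y) := by
    by_contra hne
    exact hv (hu.trans (deleteEdges_adj.2 ⟨huv, hne⟩).reachable)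
  rcases Sym2.eq_iff.1 huv_eq with huv_eq | ⟨rfl, rfl⟩
  · exact huv_eq
  · exact absurd hu h

namespace IsSingleEdgeCut

variable {X : Set V}

theorem compl (h : IsSingleEdgeCut G X x y) : IsSingleEdgeCut G Xᶜ y x where
  left_mem := h.right_notMem
  right_notMem := not_not.2 h.left_mem
  eq_of_adj _ hu _ hv huv := (h.eq_of_adj (not_not.1 hv) hu huv.symm).symm

theorem compl_adj (h : IsSingleEdgeCut G X x y) (hu : u ∈ X) (hv : v ∉ X)
    (huv : u ≠ x ∨ v ≠ y) : Gᶜ.Adj u v :=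
  (SimpleGraph.compl_adj ..).2 ⟨fun e ↦ hv (e ▸ hu), fun hadj ↦
    huv.elim (· (h.eq_of_adj hu hv hadj).1) (· (h.eq_of_adj hu hv hadj).2)⟩

theorem exists_mem_ne_ne (h : IsSingleEdgeCut G X x y) (hxy : G.Adj x y)
    (hG : ∀ s t, ¬ IsPendant G s t) (u : V) : ∃ v ∈ X, v ≠ x ∧ v ≠ u := by
  obtain ⟨s, hsy, hxs⟩ := exists_adj_ne_of_not_isPendant (hG x y) hxy
  obtain ⟨t, htx, hst⟩ := exists_adj_ne_of_not_isPendant (hG s x) hxs.symm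
  have hs : s ∈ X := by_contra fun hs ↦ hsy (h.eq_of_adj h.left_mem hs hxs).2
  have ht : t ∈ X := by_contra fun ht ↦ hxs.ne' (h.eq_of_adj hs ht hst).1
  by_cases hsu : s = u
  · exact ⟨t, ht, htx, hsu ▸ hst.ne'⟩
  · exact ⟨s, hs, hxs.ne', hsu⟩

/-- The last two hypotheses say that both sides of the cut have at least three vertices. All edges
between the sides except `xy` belong to `Gᶜ`, and then every edge lies in a triangle or a square. -/
theorem not_isBridge_compl {p q : V} (h : IsSingleEdgeCut G X x y)
    (hX : ∀ u, ∃ v ∈ X, v ≠ x ∧ v ≠ u) (hY : ∀ u, ∃ v ∈ Xᶜ, v ≠ y ∧ v ≠ u) :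
    ¬ Gᶜ.IsBridge s(p, q) := by
  have of_mem_of_notMem {p q : V} (hp : p ∈ X) (hq : q ∉ X) : ¬ Gᶜ.IsBridge s(p, q) := by
    obtain ⟨p', hp', hp'x, hp'p⟩ := hX p
    obtain ⟨q', hq', hq'y, hq'q⟩ := hY q
    exact not_isBridge_of_square (h.compl_adj hp hq' (.inr hq'y))
      (h.compl_adj hp' hq' (.inl hp'x)).symm (h.compl_adj hp' hq (.inl hp'x)) hq'q hp'p
  by_cases hp : p ∈ X <;> by_cases hq : q ∈ X
  · obtain ⟨z, hz, hzy, -⟩ := hY y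
    exact not_isBridge_of_triangle (h.compl_adj hp hz (.inr hzy))
      (h.compl_adj hq hz (.inr hzy)).symm
  · exact of_mem_of_notMem hp hq
  · rw [Sym2.eq_swap]
    exact of_mem_of_notMem hq hp
  · obtain ⟨z, hz, hzx, -⟩ := hX x
    exact not_isBridge_of_triangle (h.compl_adj hz hp (.inl hzx)).symm
      (h.compl_adj hz hq (.inl hzx))

end IsSingleEdgeCut

theorem exists_isPendant_of_isBridge (hG : G.Connected) (hb : ∃ e, G.IsBridge e)
    (hbc : ∃ e, Gᶜ.IsBridge e) : ∃ x y, IsPendant G x y := by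
  by_contra! hno
  obtain ⟨⟨x, y⟩, hb⟩ := hb
  obtain ⟨⟨p, q⟩, hbc⟩ := hbc
  have hxy : G.Adj x y := hb.reachable_iff_adj.1 (hG x y)
  obtain ⟨X, hX⟩ := exists_isSingleEdgeCut_of_isBridge hb
  exact hX.not_isBridge_compl (hX.exists_mem_ne_ne hxy hno)
    (hX.compl.exists_mem_ne_ne hxy.symm hno) hbc

end PendantVertices

section ConflictFree

variable {V : Type*} {G : SimpleGraph V} {t t' u v : V} {c : Sym2 V → ℕ} {k : ℕ}

/-- The vertices `u` and `v` are joined by a path on which some color appears on exactly one edge,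
as `IsCFCColoring` requires of any two distinct vertices. -/
def ConflictFreeJoined (G : SimpleGraph V) (c : Sym2 V → ℕ) (u v : V) : Prop :=
  ∃ p : G.Path u v, ∃ e ∈ p.1.edges, ∀ e' ∈ p.1.edges, c e' = c e → e' = e

namespace ConflictFreeJoined

theorem symm (h : ConflictFreeJoined G c u v) : ConflictFreeJoined G c v u := by
  obtain ⟨p, e, he, h⟩ := h
  exact ⟨p.reverse, e, by simpa using he, by simpa using h⟩

theorem of_count_eq_one (p : G.Walk u v) (hp : p.IsPath) (k : ℕ)
    (hk : (p.edges.map c).count k = 1) : ConflictFreeJoined G c u v := by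
  rw [List.count, List.countP_map, List.countP_eq_length_filter, List.length_eq_one_iff] at hk
  obtain ⟨e, he⟩ := hk
  have mem_iff (e' : Sym2 V) : e' ∈ p.edges ∧ c e' = k ↔ e' = e := by
    simpa using congrArg (e' ∈ ·) he
  obtain ⟨hep, rfl⟩ := (mem_iff e).2 rfl
  exact ⟨⟨p, hp⟩, e, hep, fun e' he' hc ↦ (mem_iff e').1 ⟨he', hc⟩⟩

theorem of_adj (h : G.Adj u v) : ConflictFreeJoined G c u v :=
  of_count_eq_one h.toWalk (.of_adj h) (c s(u, v)) (by simp)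

end ConflictFreeJoined

theorem exists_isCFCColoring [Finite V] (hG : G.Connected) :
    ∃ k, ∃ c : Sym2 V → ℕ, (∀ e ∈ G.edgeSet, c e < k) ∧ IsCFCColoring G c := by
  obtain ⟨k, ⟨φ⟩⟩ := Finite.exists_equiv_fin (Sym2 V)
  refine ⟨k, fun e ↦ φ e, fun e _ ↦ (φ e).isLt, fun u v huv ↦ ?_⟩
  obtain ⟨p, hp⟩ := hG.exists_isPath u v
  obtain ⟨e, he⟩ := List.exists_mem_of_ne_nil p.edges
    (mt Walk.edges_eq_nil.1 (Walk.not_nil_of_ne huv))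
  exact ⟨⟨p, hp⟩, e, he, fun e' _ h ↦ φ.injective (Fin.ext h)⟩

theorem exists_isCFCColoring_lt_cfcNum [Finite V] (hG : G.Connected) :
    ∃ c : Sym2 V → ℕ, (∀ e ∈ G.edgeSet, c e < cfcNum G) ∧ IsCFCColoring G c :=
  Nat.sInf_mem (exists_isCFCColoring hG)

theorem cfcNum_le (hlt : ∀ e ∈ G.edgeSet, c e < k) (hc : IsCFCColoring G c) : cfcNum G ≤ k :=
  Nat.sInf_le ⟨c, hlt, hc⟩

theorem two_le_cfcNum [Finite V] (hG : G.Connected) (hne : G ≠ ⊤) : 2 ≤ cfcNum G := by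
  obtain ⟨u, v, huv, hadj⟩ := ne_top_iff_exists_not_adj.1 hne
  obtain ⟨c, hlt, hc⟩ := exists_isCFCColoring_lt_cfcNum hG
  obtain ⟨⟨p, hp⟩, e, he, huniq⟩ := hc u v huv
  by_contra! hcfc
  have edges_eq : p.edges = List.replicate p.edges.length e :=
    List.eq_replicate_of_mem fun e' he' ↦ huniq e' he' (by
      have := hlt e (p.edges_subset_edgeSet he)
      have := hlt e' (p.edges_subset_edgeSet he')
      lia)
  have length_le : p.length ≤ 1 := by
    rw [← p.length_edges, ← List.nodup_replicate, ← edges_eq]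
    exact hp.isTrail.edges_nodup
  have length_ne : p.length ≠ 0 := fun h ↦ huv (Walk.eq_of_length_eq_zero h)
  exact hadj (Walk.adj_of_length_eq_one (p := p) (by lia))

theorem edges_eq_of_isBridge_of_isBridge (hvt : G.Adj v t) (ht : G.IsBridge s(v, t))
    (ht' : G.IsBridge s(v, t')) (hne : t ≠ t') {p : G.Walk t t'} (hp : p.IsPath) :
    p.edges = [s(t, v), s(v, t')] := by
  classical
  rw [Sym2.eq_swap, isBridge_iff_forall_walk_mem_edges] at ht
  rw [isBridge_iff_forall_walk_mem_edges] at ht'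
  have hv : v ∈ p.support := by
    by_contra hv
    have hlen := (hp.cons hv (h := hvt)).length_eq_one_of_mem_edges (ht' _)
    exact hne (Walk.eq_of_length_eq_zero (p := p) (by simpa using hlen))
  rw [← p.take_spec hv, Walk.edges_append,
    (hp.takeUntil hv).eq_adj_toWalk_of_mem_edges (ht _),
    (hp.dropUntil hv).eq_adj_toWalk_of_mem_edges (ht' _)]
  rfl

theorem IsCFCColoring.injOn_bridgesAt (hc : IsCFCColoring G c) : Set.InjOn c (bridgesAt G v) := by
  intro e he e' he' hcee'
  obtain ⟨t, hvt, ht, rfl⟩ := exists_eq_of_mem_bridgesAt he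
  obtain ⟨t', -, ht', rfl⟩ := exists_eq_of_mem_bridgesAt he'
  by_contra hne
  obtain ⟨⟨p, hp⟩, e, he, huniq⟩ := hc t t' fun h ↦ hne (h ▸ rfl)
  rw [edges_eq_of_isBridge_of_isBridge hvt ht ht' (fun h ↦ hne (h ▸ rfl)) hp,
    Sym2.eq_swap] at he huniq
  grind

theorem ncard_bridgesAt_le_cfcNum [Finite V] (hG : G.Connected) :
    (bridgesAt G v).ncard ≤ cfcNum G := by
  obtain ⟨c, hlt, hc⟩ := exists_isCFCColoring_lt_cfcNum hG
  rw [← Finset.card_range (cfcNum G), ← Set.ncard_coe_finset]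
  exact Set.ncard_le_ncard_of_injOn c (fun e he ↦ by simpa using hlt e he.1.1) hc.injOn_bridgesAt

end ConflictFree

section DominatingAllButOne

variable {V : Type*} {G : SimpleGraph V} {a b u w x y : V}

namespace IsPendant

theorem exists_adj_of_notMem_bridgesAt (hab : IsPendant Gᶜ a b) (hau : G.Adj a u)
    (hu : s(a, u) ∉ bridgesAt G a) :
    (∃ z, G.Adj u z ∧ G.Adj z a) ∨ G.Adj b u ∧ ∃ t, t ≠ u ∧ G.Adj b t := by
  classical
  -- The second vertex of a path from `u` to `a` avoiding `ua` is adjacent to `a`, unless it is `b`.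
  have hbridge : ¬ G.IsBridge s(u, a) := fun h ↦ hu (mk_mem_bridgesAt.2 ⟨hau, Sym2.eq_swap ▸ h⟩)
  rw [isBridge_iff_forall_walk_mem_edges, not_forall] at hbridge
  obtain ⟨p, hp⟩ := hbridge
  obtain ⟨q, hq, hqe⟩ : ∃ q : G.Walk u a, q.IsPath ∧ s(u, a) ∉ q.edges :=
    ⟨p.bypass, p.bypass_isPath, fun h ↦ hp (p.edges_bypass_subset_edges h)⟩
  match q with
  | .nil => exact absurd hau G.irrefl
  | .cons (v := z) huz r =>
    have hza : z ≠ a := by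
      rintro rfl
      simp at hqe
    rcases eq_or_ne z b with rfl | hzb
    · match r with
      | .nil => exact absurd rfl hza
      | .cons (v := t) hzt r' => exact .inr ⟨huz.symm, t, by rintro rfl; simp at hq, hzt⟩
    · exact .inl ⟨z, huz, (hab.adj_iff_of_compl.2 ⟨hza, hzb⟩).symm⟩

theorem isPendant_of_mem_bridgesAt (hab : IsPendant Gᶜ a b) (hbw : G.Adj b w)
    (hu : s(a, u) ∈ bridgesAt G a) (huw : u ≠ w) : IsPendant G u a := by
  have hau := (mk_mem_bridgesAt.1 hu).1
  refine fun z ↦ ⟨fun huz ↦ ?_, fun hz ↦ hz ▸ hau.symm⟩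
  by_contra hza
  rcases eq_or_ne z b with rfl | hzb
  · exact notMem_bridgesAt_of_square huz.symm hbw (hab.adj_left_of_adj_right hbw) huw
      (Ne.symm hza) hu
  · exact notMem_bridgesAt_of_adj huz (hab.adj_iff_of_compl.2 ⟨hza, hzb⟩).symm hu

theorem isAcyclic_of_forall_mem_bridgesAt (hab : IsPendant Gᶜ a b)
    (h : ∀ u, G.Adj a u → s(a, u) ∈ bridgesAt G a) : G.IsAcyclic := by
  have isBridge_left {u : V} (hau : G.Adj a u) : G.IsBridge s(a, u) :=
    (mk_mem_bridgesAt.1 (h u hau)).2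
  have isBridge_right {u : V} (hbu : G.Adj b u) : G.IsBridge s(b, u) := by
    by_contra hbridge
    obtain ⟨t, htu, hbt⟩ := exists_adj_ne_of_not_isPendant (mt isBridge hbridge) hbu
    exact notMem_bridgesAt_of_square hbu hbt (hab.adj_left_of_adj_right hbt) htu.symm hab.adj.ne
      (h u (hab.adj_left_of_adj_right hbu))
  refine isAcyclic_iff_forall_adj_isBridge.2 fun u v huv ↦ ?_
  by_cases hua : u = a
  · exact hua ▸ isBridge_left (hua ▸ huv)
  by_cases hva : v = a
  · exact Sym2.eq_swap ▸ hva ▸ isBridge_left (hva ▸ huv.symm)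
  by_cases hub : u = b
  · exact hub ▸ isBridge_right (hub ▸ huv)
  by_cases hvb : v = b
  · exact Sym2.eq_swap ▸ hvb ▸ isBridge_right (hvb ▸ huv.symm)
  · exact absurd (h u (hab.adj_iff_of_compl.2 ⟨hua, hub⟩))
      (notMem_bridgesAt_of_adj huv (hab.adj_iff_of_compl.2 ⟨hva, hvb⟩).symm)

theorem isTree_iff_ncard_bridgesAt [Fintype V] (hG : G.Connected) (hab : IsPendant Gᶜ a b) :
    G.IsTree ↔ (bridgesAt G a).ncard = Fintype.card V - 2 := by
  classical
  have ncard_incidenceSet : (G.incidenceSet a).ncard = Fintype.card V - 2 := by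
    rw [← hab.degree_of_compl, ← card_incidenceSet_eq_degree, ← Nat.card_eq_fintype_card,
      Nat.card_coe_set_eq]
  constructor
  · intro hT
    rw [← ncard_incidenceSet]
    congr 1
    exact Set.sep_eq_self_iff_mem_true.2 fun e he ↦
      isAcyclic_iff_forall_isBridge.1 hT.isAcyclic he.1
  · intro hcard
    have bridgesAt_eq : bridgesAt G a = G.incidenceSet a :=
      Set.eq_of_subset_of_ncard_le (Set.sep_subset ..) (by rw [hcard, ncard_incidenceSet])
    refine ⟨hG, hab.isAcyclic_of_forall_mem_bridgesAt fun u hau ↦ ?_⟩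
    rw [bridgesAt_eq]
    exact ⟨hau, Sym2.mem_mk_left a u⟩

theorem maxDegree_eq_of_compl [Fintype V] [DecidableRel G.Adj] (hGc : Gᶜ.Connected)
    (hab : IsPendant Gᶜ a b) : G.maxDegree = Fintype.card V - 2 := by
  classical
  have : Nontrivial V := ⟨a, b, hab.adj.ne⟩
  refine le_antisymm (maxDegree_le_of_forall_degree_le _ _ fun v ↦ ?_) ?_
  · have := hGc.preconnected.degree_pos_of_nontrivial v
    have := G.degree_compl v
    lia
  · rw [← hab.degree_of_compl]
    exact G.degree_le_maxDegree a

theorem exists_isPendant_of_two_lt_ncard [Finite V] (hG : G.Connected)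
    (hab : IsPendant Gᶜ a b) (h : 2 < (bridgesAt G a).ncard) :
    ∃ s t, s ≠ t ∧ IsPendant G s a ∧ IsPendant G t a := by
  have : Nontrivial V := ⟨a, b, hab.adj.ne⟩
  obtain ⟨w, hbw⟩ := hG.preconnected.exists_adj_of_nontrivial b
  have one_lt : 1 < (bridgesAt G a \ {s(a, w)}).ncard := by
    have := Set.ncard_le_ncard_sdiff_add_ncard (bridgesAt G a) {s(a, w)}
    have := Set.ncard_singleton s(a, w)
    lia
  obtain ⟨e, ⟨he, hew⟩, e', ⟨he', hew'⟩, hee'⟩ := (Set.one_lt_ncard (Set.toFinite _)).1 one_lt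
  obtain ⟨s, -, -, rfl⟩ := exists_eq_of_mem_bridgesAt he
  obtain ⟨t, -, -, rfl⟩ := exists_eq_of_mem_bridgesAt he'
  exact ⟨s, t, fun h ↦ hee' (h ▸ rfl), hab.isPendant_of_mem_bridgesAt hbw he fun h ↦ hew (h ▸ rfl),
    hab.isPendant_of_mem_bridgesAt hbw he' fun h ↦ hew' (h ▸ rfl)⟩

end IsPendant

theorem ncard_bridgesAt_le_two_or [Fintype V] (h4 : 4 ≤ Fintype.card V) (hG : G.Connected)
    (hGc : Gᶜ.Connected) (hab : IsPendant Gᶜ a b) (hxy : IsPendant G x y) :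
    (bridgesAt G a).ncard ≤ 2 ∨ (bridgesAt Gᶜ x).ncard ≤ 2 := by
  by_contra! h
  obtain ⟨s, s', hss', hs, hs'⟩ := hab.exists_isPendant_of_two_lt_ncard hG h.1
  obtain ⟨t, t', htt', ht, ht'⟩ :=
    IsPendant.exists_isPendant_of_two_lt_ncard hGc (by rwa [compl_compl]) h.2
  have eq_of_isPendant {s : V} (hs : IsPendant G s a) : s = x := by
    by_contra hsx
    have eq_of_isPendant_compl {t : V} (ht : IsPendant Gᶜ t x) : t = a := by
      have hst : s ≠ t := fun h ↦ hs.not_isPendant_compl h4 (h ▸ ht)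
      exact (hs t).1 (ht.adj_iff_of_compl.2 ⟨hst, hsx⟩).symm
    exact htt' ((eq_of_isPendant_compl ht).trans (eq_of_isPendant_compl ht').symm)
  exact hss' ((eq_of_isPendant hs).trans (eq_of_isPendant hs').symm)

theorem isTree_of_card_eq_four [Fintype V] (hG : G.Connected) (hGc : Gᶜ.Connected)
    (h4 : Fintype.card V = 4) : G.IsTree := by
  classical
  refine isTree_iff_connected_and_card.2 ⟨hG, le_antisymm ?_ hG.card_vert_le_card_edgeSet_add_one⟩
  have le_compl := hGc.card_vert_le_card_edgeSet_add_one
  have add_compl : G.edgeSet.ncard + Gᶜ.edgeSet.ncard = 6 := by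
    rw [← Set.ncard_union_eq (disjoint_edgeSet.2 disjoint_compl_right), ← edgeSet_sup,
      sup_compl_eq_top, ← coe_edgeFinset, Set.ncard_coe_finset,
      card_edgeFinset_top_eq_card_choose_two, h4]
    rfl
  rw [Nat.card_coe_set_eq, Nat.card_eq_fintype_card, h4] at le_compl ⊢
  lia

end DominatingAllButOne

section Coloring

variable {V : Type*} {G : SimpleGraph V} {a b u v w z : V} {g : Sym2 V → ℕ} {k : ℕ}

theorem exists_injOn_lt_eq {α : Type*} {s : Set α} {k m : ℕ} (hs : s.Finite) (hsk : s.ncard ≤ k)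
    (hm : m < k) (i : α) : ∃ g : α → ℕ, (∀ j ∈ s, g j < k) ∧ s.InjOn g ∧ g i = m := by
  have : Nonempty (Fin k) := ⟨⟨m, hm⟩⟩
  have encard_le : s.encard ≤ (Set.univ : Set (Fin k)).encard := by
    rw [Set.encard_univ, ENat.card_eq_coe_fintype_card, Fintype.card_fin, ← hs.cast_ncard_eq]
    exact_mod_cast hsk
  obtain ⟨f, -, hinj⟩ := hs.exists_injOn_of_encard_le encard_le
  let σ : Equiv.Perm (Fin k) := Equiv.swap (f i) ⟨m, hm⟩
  exact ⟨fun j ↦ σ (f j), fun j _ ↦ (σ (f j)).isLt,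
    (Fin.val_injective.comp σ.injective).comp_injOn hinj, by simp [σ]⟩

open Classical in
/-- The bridges at `a` are colored by `g`, the other edges at `a` and the edges at `b` except `bw`
have color `1`, and `bw` and all remaining edges have color `0`. This is an optimal conflict-free
coloring when `a` is adjacent to every vertex except `b`, `w` is a neighbour of `b`, and `g` assigns
distinct colors to the bridges at `a`, as few as possible, with `g s(a, w) = 1`. -/
noncomputable def starColoring (G : SimpleGraph V) (a b w : V) (g : Sym2 V → ℕ) (e : Sym2 V) : ℕ :=
  if e ∈ bridgesAt G a then g e else if a ∈ e ∨ b ∈ e ∧ e ≠ s(b, w) then 1 else 0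

theorem starColoring_of_mem {e : Sym2 V} (he : e ∈ bridgesAt G a) :
    starColoring G a b w g e = g e :=
  if_pos he

theorem starColoring_of_notMem (hu : s(a, u) ∉ bridgesAt G a) :
    starColoring G a b w g s(a, u) = 1 := by
  simp [starColoring, hu]

theorem starColoring_left (hg : g s(a, w) = 1) : starColoring G a b w g s(a, w) = 1 := by
  by_cases hw : s(a, w) ∈ bridgesAt G a
  · rw [starColoring_of_mem hw, hg]
  · exact starColoring_of_notMem hw

theorem starColoring_of_ne (hua : u ≠ a) (hub : u ≠ b) (hva : v ≠ a) (hvb : v ≠ b) :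
    starColoring G a b w g s(u, v) = 0 := by
  simp [starColoring, mk_notMem_bridgesAt hua hva, hua.symm, hub.symm, hva.symm, hvb.symm]

theorem starColoring_right (hba : b ≠ a) (hwa : w ≠ a) : starColoring G a b w g s(b, w) = 0 := by
  simp [starColoring, mk_notMem_bridgesAt hba hwa, hba.symm, hwa.symm]

theorem starColoring_right_of_ne (hba : b ≠ a) (hua : u ≠ a) (huw : u ≠ w) :
    starColoring G a b w g s(b, u) = 1 := by
  rw [starColoring, if_neg (mk_notMem_bridgesAt hba hua),
    if_pos (.inr ⟨Sym2.mem_mk_left b u, fun h ↦ huw (Sym2.congr_right.1 h)⟩)]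

theorem starColoring_lt (hk : 2 ≤ k) (hg : ∀ e ∈ bridgesAt G a, g e < k) (e : Sym2 V) :
    starColoring G a b w g e < k := by
  rw [starColoring]
  split_ifs with he
  · exact hg e he
  all_goals lia

namespace IsPendant

theorem conflictFreeJoined_right (hab : IsPendant Gᶜ a b) (hbw : G.Adj b w)
    (hg : g s(a, w) = 1) (hvb : v ≠ b) :
    ConflictFreeJoined G (starColoring G a b w g) b v := by
  have haw := hab.adj_left_of_adj_right hbw
  have hba := hab.adj.ne'
  have hbw_color := starColoring_right (G := G) (g := g) hba haw.ne'
  have hwa_color := Sym2.eq_swap ▸ starColoring_left (G := G) (b := b) hg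
  by_cases hbv : G.Adj b v
  · exact .of_adj hbv
  by_cases hva : v = a
  · subst hva
    refine .of_count_eq_one (.cons hbw (.cons haw.symm .nil)) ?_ 0 ?_
    · simp [hbw.ne, haw.ne', hba]
    · simp [hbw_color, hwa_color]
  have hav : G.Adj a v := hab.adj_iff_of_compl.2 ⟨hva, hvb⟩
  have hwv : w ≠ v := fun h ↦ hbv (h ▸ hbw)
  let p : G.Walk b v := .cons hbw (.cons haw.symm (.cons hav .nil))
  have hp : p.IsPath := by simp [p, hbw.ne, haw.ne', hav.ne, hba, hvb.symm, hwv]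
  by_cases hav_color : starColoring G a b w g s(a, v) = 0
  · exact .of_count_eq_one p hp 1 (by simp [p, hbw_color, hwa_color, hav_color])
  · exact .of_count_eq_one p hp 0 (by simp [p, hbw_color, hwa_color, hav_color])

theorem conflictFreeJoined_of_adj_of_adj (hab : IsPendant Gᶜ a b) (hau : G.Adj a u)
    (hav : G.Adj a v) (huz : G.Adj u z) (hza : G.Adj z a) (hne : u ≠ v) (hzv : z ≠ v)
    (hv : starColoring G a b w g s(a, v) = 1) :
    ConflictFreeJoined G (starColoring G a b w g) u v := by
  have huz_color : starColoring G a b w g s(u, z) = 0 :=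
    starColoring_of_ne hau.ne' (hab.adj_iff_of_compl.1 hau).2 hza.ne
      (hab.adj_iff_of_compl.1 hza.symm).2
  have hza_color : starColoring G a b w g s(z, a) = 1 :=
    Sym2.eq_swap ▸ starColoring_of_notMem (notMem_bridgesAt_of_adj huz.symm hau.symm)
  refine .of_count_eq_one (.cons huz (.cons hza (.cons hav .nil))) ?_ 0 ?_
  · simp [huz.ne, hza.ne, hau.ne', hav.ne, hne, hzv]
  · simp [huz_color, hza_color, hv]

theorem exists_adj_right_count_eq_one (hab : IsPendant Gᶜ a b) (hbw : G.Adj b w)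
    (hbu : G.Adj b u) (ht : ∃ t, t ≠ u ∧ G.Adj b t) :
    ∃ t, t ≠ u ∧ G.Adj b t ∧
      [starColoring G a b w g s(u, b), starColoring G a b w g s(b, t)].count 0 = 1 := by
  have hba := hab.adj.ne'
  have hau := hab.adj_left_of_adj_right hbu
  rw [Sym2.eq_swap]
  rcases eq_or_ne u w with rfl | huw
  · obtain ⟨t, htu, hbt⟩ := ht
    have hat := hab.adj_left_of_adj_right hbt
    refine ⟨t, htu, hbt, ?_⟩
    simp [starColoring_right hba hau.ne', starColoring_right_of_ne hba hat.ne' htu]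
  · have haw := hab.adj_left_of_adj_right hbw
    refine ⟨w, huw.symm, hbw, ?_⟩
    simp [starColoring_right hba haw.ne', starColoring_right_of_ne hba hau.ne' huw]

theorem conflictFreeJoined_of_adj_right (hab : IsPendant Gᶜ a b) (hbw : G.Adj b w)
    (hbu : G.Adj b u) (ht : ∃ t, t ≠ u ∧ G.Adj b t) (hav : G.Adj a v) (hne : u ≠ v)
    (hv : starColoring G a b w g s(a, v) = 1) :
    ConflictFreeJoined G (starColoring G a b w g) u v := by
  obtain ⟨t, htu, hbt, hcount⟩ := hab.exists_adj_right_count_eq_one (g := g) hbw hbu ht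
  rcases eq_or_ne t v with rfl | htv
  · refine .of_count_eq_one (.cons hbu.symm (.cons hbt .nil)) ?_ 0 hcount
    simp [hbu.ne', hbt.ne, hne]
  · have hau := hab.adj_left_of_adj_right hbu
    have hat := hab.adj_left_of_adj_right hbt
    have hbv := (hab.adj_iff_of_compl.1 hav).2.symm
    have hta_color : starColoring G a b w g s(t, a) = 1 :=
      Sym2.eq_swap ▸ starColoring_of_notMem
        (notMem_bridgesAt_of_square hbt hbu hau htu hab.adj.ne)
    refine .of_count_eq_one (.cons hbu.symm (.cons hbt (.cons hat.symm (.cons hav .nil)))) ?_ 0 ?_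
    · simp [hbu.ne', hbt.ne, hat.ne', hau.ne', hav.ne, hab.adj.ne', hbv, htu.symm, hne, htv]
    · simpa [hta_color, hv, List.count_cons] using hcount

theorem conflictFreeJoined_of_notMem (hab : IsPendant Gᶜ a b) (hbw : G.Adj b w)
    (hau : G.Adj a u) (hav : G.Adj a v) (huv : ¬ G.Adj u v) (hne : u ≠ v)
    (hu : s(a, u) ∉ bridgesAt G a) (hv : starColoring G a b w g s(a, v) = 1) :
    ConflictFreeJoined G (starColoring G a b w g) u v := by
  rcases hab.exists_adj_of_notMem_bridgesAt hau hu with ⟨z, huz, hza⟩ | ⟨hbu, ht⟩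
  · exact hab.conflictFreeJoined_of_adj_of_adj hau hav huz hza hne (fun h ↦ huv (h ▸ huz)) hv
  · exact hab.conflictFreeJoined_of_adj_right hbw hbu ht hav hne hv

theorem isCFCColoring_starColoring (hab : IsPendant Gᶜ a b) (hbw : G.Adj b w)
    (hinj : (bridgesAt G a).InjOn g) (hg : g s(a, w) = 1) :
    IsCFCColoring G (starColoring G a b w g) := by
  intro u v huv
  change ConflictFreeJoined G (starColoring G a b w g) u v
  by_cases hadj : G.Adj u v
  · exact .of_adj hadj
  by_cases hub : u = b
  · exact hub ▸ hab.conflictFreeJoined_right hbw hg (hub ▸ huv.symm)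
  by_cases hvb : v = b
  · exact hvb ▸ (hab.conflictFreeJoined_right hbw hg hub).symm
  have hau : G.Adj a u := hab.adj_iff_of_compl.2
    ⟨fun h ↦ hadj (h ▸ hab.adj_iff_of_compl.2 ⟨h ▸ huv.symm, hvb⟩), hub⟩
  have hav : G.Adj a v := hab.adj_iff_of_compl.2
    ⟨fun h ↦ hadj (h ▸ hau.symm), hvb⟩
  by_cases hcolor : starColoring G a b w g s(a, u) = starColoring G a b w g s(a, v)
  · by_cases hu : s(a, u) ∈ bridgesAt G a
    · have hv : s(a, v) ∉ bridgesAt G a := by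
        intro hv
        rw [starColoring_of_mem hu, starColoring_of_mem hv] at hcolor
        exact huv (Sym2.congr_right.1 (hinj hu hv hcolor))
      rw [starColoring_of_notMem hv] at hcolor
      have hadj' : ¬ G.Adj v u := fun h ↦ hadj h.symm
      exact (hab.conflictFreeJoined_of_notMem hbw hav hau hadj' huv.symm hv hcolor).symm
    · rw [starColoring_of_notMem hu] at hcolor
      exact hab.conflictFreeJoined_of_notMem hbw hau hav hadj huv hu hcolor.symm
  · refine .of_count_eq_one (.cons hau.symm (.cons hav .nil)) ?_
      (starColoring G a b w g s(a, u)) ?_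
    · simp [hau.ne', hav.ne, huv]
    · simp [Sym2.eq_swap (a := u), Ne.symm hcolor]

theorem cfcNum_eq [Finite V] (hG : G.Connected) (hab : IsPendant Gᶜ a b) :
    cfcNum G = max 2 (bridgesAt G a).ncard := by
  refine le_antisymm ?_ (max_le (two_le_cfcNum hG ?_) (ncard_bridgesAt_le_cfcNum hG))
  · have : Nontrivial V := ⟨a, b, hab.adj.ne⟩
    obtain ⟨w, hbw⟩ := hG.preconnected.exists_adj_of_nontrivial b
    obtain ⟨g, hlt, hinj, hg⟩ := exists_injOn_lt_eq (bridgesAt G a).toFinite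
      (le_max_right 2 _) (lt_max_of_lt_left one_lt_two) s(a, w)
    exact cfcNum_le (fun e _ ↦ starColoring_lt (le_max_left ..) hlt e)
      (hab.isCFCColoring_starColoring hbw hinj hg)
  · exact ne_top_iff_exists_not_adj.2 ⟨a, b, hab.adj.ne, hab.adj.2⟩

end IsPendant

end Coloring

/-- Nordhaus–Gaddum bounds when both G and Ḡ are connected with a cut-edge (n ≥ 4);
equality in either upper bound holds iff one of G, Ḡ is a tree with maximum degree n − 2. -/
theorem nordhausGaddum_edgeConnectivity_one {V : Type*} [Fintype V] [DecidableEq V]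
    (G : SimpleGraph V) [DecidableRel G.Adj]
    (n : ℕ) (hn : Fintype.card V = n) (h4 : 4 ≤ n)
    (hG : G.Connected) (hGc : Gᶜ.Connected)
    (hb : ∃ e : Sym2 V, G.IsBridge e) (hbc : ∃ e : Sym2 V, Gᶜ.IsBridge e) :
    (4 ≤ cfcNum G + cfcNum Gᶜ ∧ cfcNum G + cfcNum Gᶜ ≤ n) ∧
    (4 ≤ cfcNum G * cfcNum Gᶜ ∧ cfcNum G * cfcNum Gᶜ ≤ 2 * (n - 2)) ∧
    ((cfcNum G + cfcNum Gᶜ = n ∨ cfcNum G * cfcNum Gᶜ = 2 * (n - 2)) ↔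
      ((G.IsTree ∧ G.maxDegree = n - 2) ∨ (Gᶜ.IsTree ∧ Gᶜ.maxDegree = n - 2))) := by
  subst hn
  obtain ⟨x, y, hxy⟩ := exists_isPendant_of_isBridge hG hb hbc
  obtain ⟨a, b, hab⟩ := exists_isPendant_of_isBridge hGc hbc (by rwa [compl_compl])
  have hxy' : IsPendant Gᶜᶜ x y := by rwa [compl_compl]
  have tree_iff := hab.isTree_iff_ncard_bridgesAt hG
  have tree_iff' := hxy'.isTree_iff_ncard_bridgesAt hGc
  have ncard_of_four (h : Fintype.card V = 4) := tree_iff.1 (isTree_of_card_eq_four hG hGc h)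
  have maxDegree_eq := hab.maxDegree_eq_of_compl hGc
  have maxDegree_eq' := hxy'.maxDegree_eq_of_compl (by rwa [compl_compl])
  have ncard_le : (bridgesAt G a).ncard ≤ Fintype.card V - 2 :=
    ncard_bridgesAt_le_degree.trans_eq hab.degree_of_compl
  have ncard_le' : (bridgesAt Gᶜ x).ncard ≤ Fintype.card V - 2 :=
    ncard_bridgesAt_le_degree.trans_eq hxy'.degree_of_compl
  rw [hab.cfcNum_eq hG, hxy'.cfcNum_eq hGc, tree_iff, tree_iff', maxDegree_eq, maxDegree_eq']
  rcases ncard_bridgesAt_le_two_or h4 hG hGc hab hxy with h | h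
  · rw [max_eq_left h]
    lia
  · rw [max_eq_left h]
    lia
end
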